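/- Let Γ = (X, F, r) be a Gambling House such that (X,d) is a compact metric space, r is continuous, and F is non-expansive for the Kantorovich-Rubinstein distance: for all x, x' ∈ X and u ∈ F(x) there exists u' ∈ F(x') with d_KR(u,u') ≤ d(x,x'). Then Γ has a general uniform value v*, and for every x ∈ X, v*(x) is the infimum of w(x) over all continuous affine functions w : Δ(X) → [0,1] such that (1) w(δ_y) ≥ sup_{u ∈ F(y)} w(u) for all y ∈ X, and (2) w(u) ≥ r(u) for all u ∈ R, where R is the set of invariant measures of Γ. -/

import Mathlib

open Set MeasureTheory

namespace Stmt15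

variable {X : Type*} [MetricSpace X] [CompactSpace X] [MeasurableSpace X] [BorelSpace X]

/-- `Δ_f(X)`: finitely supported probability measures on `X`, seen as finitely supported
nonnegative weight functions summing to 1. -/
def Δf (X : Type*) : Set (X →₀ ℝ) := {u | (∀ x, 0 ≤ u x) ∧ u.sum (fun _ r => r) = 1}

/-- The mixed extension `F̂(u) = { Σ_x u(x)·f(x) : f(x) ∈ conv F(x) for all x }` of a
correspondence `F : X ⇉ Δ_f(X)`. -/
def Fhat {X : Type*} (F : X → Set (X →₀ ℝ)) (u : X →₀ ℝ) : Set (X →₀ ℝ) :=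
  {w | ∃ f : X → (X →₀ ℝ), (∀ x, f x ∈ convexHull ℝ (F x)) ∧
    w = u.sum (fun x r => r • f x)}

/-- The Kantorovich–Rubinstein distance on `Δ_f(X)`. -/
noncomputable def dKR {X : Type*} [MetricSpace X] (u v : X →₀ ℝ) : ℝ :=
  sSup {r : ℝ | ∃ f : X → ℝ, LipschitzWith 1 f ∧
    r = u.sum (fun x a => a * f x) - v.sum (fun x a => a * f x)}

/-- An evaluation: a probability distribution `θ = (θ_t)_{t ≥ 1}` over stages
(indexed here by `t : ℕ`, `t` standing for stage `t+1`). -/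
def IsEval (θ : ℕ → ℝ) : Prop := (∀ t, 0 ≤ θ t) ∧ ∑' t, θ t = 1

/-- The impatience `I(θ) = Σ_{t≥1} |θ_{t+1} − θ_t|`. -/
noncomputable def impatience (θ : ℕ → ℝ) : ℝ := ∑' t, |θ (t + 1) - θ t|

/-- The linear extension of the payoff `r` to `Δ_f(X)`. -/
noncomputable def rExt (r : X → ℝ) (u : X →₀ ℝ) : ℝ := u.sum fun x a => a * r x

/-- Mixed plays at `x₀`: `u₁ ∈ conv F(x₀)` and `u_{t+1} ∈ F̂(u_t)`. -/
def IsPlay {X : Type*} (F : X → Set (X →₀ ℝ)) (x₀ : X) (σ : ℕ → (X →₀ ℝ)) : Prop :=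
  σ 0 ∈ convexHull ℝ (F x₀) ∧ ∀ t, σ (t + 1) ∈ Fhat F (σ t)

/-- The `θ`-payoff `γ_θ(σ) = Σ_t θ_t r(u_t)` of a play. -/
noncomputable def payoff (r : X → ℝ) (θ : ℕ → ℝ) (σ : ℕ → (X →₀ ℝ)) : ℝ :=
  ∑' t, θ t * rExt r (σ t)

/-- The `θ`-value `v_θ(x) = sup_{σ ∈ Σ(x)} γ_θ(σ)`. -/
noncomputable def value (F : X → Set (X →₀ ℝ)) (r : X → ℝ) (θ : ℕ → ℝ) (x : X) : ℝ :=
  sSup {c : ℝ | ∃ σ, IsPlay F x σ ∧ c = payoff r θ σ}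

/-- The Borel measure on `X` associated to a finitely supported weight function. -/
noncomputable def toMeas (u : X →₀ ℝ) : Measure X :=
  u.sum fun x a => ENNReal.ofReal a • Measure.dirac x

/-- `w` is affine on `Δ(X)`. -/
def IsAffine (w : ProbabilityMeasure X → ℝ) : Prop :=
  ∀ (u v m : ProbabilityMeasure X) (α : ℝ), α ∈ Icc (0:ℝ) 1 →
    (m : Measure X) =
      ENNReal.ofReal α • (u : Measure X) + ENNReal.ofReal (1 - α) • (v : Measure X) →
    w m = α * w u + (1 - α) * w v

/-- The set `R` of invariant measures: `u ∈ Δ(X)` with `(u,u) ∈ cl(Graph F̂)` for the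
weak-* topology. -/
def invariantSet (F : X → Set (X →₀ ℝ)) : Set (ProbabilityMeasure X) :=
  {μ | (μ, μ) ∈ closure {p : ProbabilityMeasure X × ProbabilityMeasure X |
    ∃ u v : X →₀ ℝ, u ∈ Δf X ∧ v ∈ Fhat F u ∧
      (p.1 : Measure X) = toMeas u ∧ (p.2 : Measure X) = toMeas v}}

end Stmt15

/-! A limit play follows the closure of the graph of `F̂`, and by non-expansiveness a genuine play
from any nearby starting point can shadow it uniformly over all stages. This makes the values `v_θ`
equicontinuous and bounds them from below on average under an invariant measure. From above, the
`θ`-occupation measure of a play moves by at most a multiple of `I(θ)` in one stage, so it is nearly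
invariant, and every admissible `w` dominates the limits of `v_θ`. Conversely each limit point `g`
of `v_θ` gives an admissible function `μ ↦ ∫ g dμ`, which forces `g = v*` and, by compactness,
uniform convergence. A minimax argument over finitely many patient evaluations and the compactness
of the set of limit plays give one limit play that is good for all of them, and a play shadowing it
is the one required for the uniform value. -/

namespace Stmt15

open Finsupp Filter Topology

section Pairing

variable {X : Type*} {f g : X → ℝ} {u : X →₀ ℝ}

lemma convex_Δf : Convex ℝ (Δf X) := by
  intro u hu v hv a b ha hb hab
  refine ⟨fun x => ?_, ?_⟩
  · exact add_nonneg (mul_nonneg ha (hu.1 x)) (mul_nonneg hb (hv.1 x))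
  · rw [sum_add_index' (fun _ => rfl) (fun _ _ _ => rfl), sum_smul_index fun _ => rfl,
      sum_smul_index fun _ => rfl, ← mul_sum, ← mul_sum, hu.2, hv.2, mul_one, mul_one, hab]

lemma single_mem_Δf (x : X) : single x 1 ∈ Δf X :=
  ⟨single_nonneg.2 zero_le_one, sum_single_index rfl⟩

lemma linearCombination_mem_of_convex {E : Type*} [AddCommGroup E] [Module ℝ E] {s : Set E}
    (hs : Convex ℝ s) (hu : u ∈ Δf X) {e : X → E} (he : ∀ x, e x ∈ s) :
    linearCombination ℝ e u ∈ s :=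
  hs.sum_mem (fun x _ => hu.1 x) hu.2 fun x _ => he x

lemma linearCombination_single_one (u : X →₀ ℝ) :
    linearCombination ℝ (fun x => single x (1 : ℝ)) u = u := by
  simp [linearCombination_apply]

lemma rExt_eq_linearCombination (f : X → ℝ) (u : X →₀ ℝ) : rExt f u = linearCombination ℝ f u :=
  rfl

lemma rExt_single (f : X → ℝ) (x : X) : rExt f (single x 1) = f x := by
  simp [rExt]

lemma rExt_sub (u : X →₀ ℝ) (f g : X → ℝ) :
    rExt (fun x => f x - g x) u = rExt f u - rExt g u := by
  simp only [rExt, mul_sub, Finsupp.sum_sub]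

lemma rExt_sum_mul {ι : Type*} (s : Finset ι) (l : ι → ℝ) (f : ι → X → ℝ) (u : X →₀ ℝ) :
    rExt (fun x => ∑ i ∈ s, l i * f i x) u = ∑ i ∈ s, l i * rExt (f i) u := by
  simp only [rExt, Finsupp.sum, Finset.mul_sum]
  rw [Finset.sum_comm]
  exact Finset.sum_congr rfl fun i _ => Finset.sum_congr rfl fun x _ => mul_left_comm _ _ _

lemma rExt_linearCombination (f : X → ℝ) (v : X → X →₀ ℝ) (u : X →₀ ℝ) :
    rExt f (linearCombination ℝ v u) = rExt (fun x => rExt f (v x)) u := by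
  simp only [rExt_eq_linearCombination, linearCombination_linearCombination]

lemma rExt_mono (hu : u ∈ Δf X) (hfg : ∀ x, f x ≤ g x) : rExt f u ≤ rExt g u :=
  Finset.sum_le_sum fun x _ => mul_le_mul_of_nonneg_left (hfg x) (hu.1 x)

lemma rExt_mem_of_convex {s : Set ℝ} (hs : Convex ℝ s) (hu : u ∈ Δf X) (hf : ∀ x, f x ∈ s) :
    rExt f u ∈ s :=
  linearCombination_mem_of_convex hs hu hf

lemma abs_rExt_sub_le (hu : u ∈ Δf X) {c : ℝ} (hfg : ∀ x, |f x - g x| ≤ c) :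
    |rExt f u - rExt g u| ≤ c := by
  rw [← rExt_sub]
  exact abs_le.2 (rExt_mem_of_convex (convex_Icc _ _) hu fun x => abs_le.1 (hfg x))

lemma rExt_sub_const (hu : u ∈ Δf X) (f : X → ℝ) (c : ℝ) :
    rExt (fun x => f x - c) u = rExt f u - c := by
  rw [rExt_sub, show rExt (fun _ => c) u = c from
    rExt_mem_of_convex (convex_singleton c) hu fun _ => rfl]

end Pairing

/-- The structural requirements on the correspondence of a gambling house: every state has at least
one available gamble, and gambles are finitely supported probabilities. -/
structure IsGamblingHouse {X : Type*} (F : X → Set (X →₀ ℝ)) : Prop where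
  nonempty : ∀ x, (F x).Nonempty
  subset_Δf : ∀ x, F x ⊆ Δf X

/-- Mixed plays starting from a random state of law `u`, which is not listed in the play. -/
def IsPlayFrom {X : Type*} (F : X → Set (X →₀ ℝ)) (u : X →₀ ℝ) (σ : ℕ → X →₀ ℝ) : Prop :=
  σ 0 ∈ Fhat F u ∧ ∀ t, σ (t + 1) ∈ Fhat F (σ t)

/-- `g` is excessive: no available gamble improves it on average. -/
def IsExcessive {X : Type*} (F : X → Set (X →₀ ℝ)) (g : X → ℝ) : Prop :=
  ∀ x, ∀ u ∈ F x, rExt g u ≤ g x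

section Plays

variable {X : Type*} {F : X → Set (X →₀ ℝ)} {u v u' v' : X →₀ ℝ} {σ : ℕ → X →₀ ℝ} {x : X}
  {f g : X → ℝ}

lemma linearCombination_mem_Fhat {f : X → X →₀ ℝ} (hf : ∀ x, f x ∈ convexHull ℝ (F x))
    (u : X →₀ ℝ) : linearCombination ℝ f u ∈ Fhat F u :=
  ⟨f, hf, rfl⟩

lemma Fhat_nonempty (hF : ∀ x, (F x).Nonempty) (u : X →₀ ℝ) : (Fhat F u).Nonempty :=
  ⟨_, linearCombination_mem_Fhat (fun x => subset_convexHull _ _ (hF x).some_mem) u⟩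

lemma Fhat_single (hF : ∀ x, (F x).Nonempty) (x : X) :
    Fhat F (single x 1) = convexHull ℝ (F x) := by
  classical
  ext v
  constructor
  · rintro ⟨f, hf, rfl⟩
    simpa using hf x
  · intro hv
    have hf : ∀ y, Function.update (fun y => (hF y).some) x v y ∈ convexHull ℝ (F y) := by
      intro y
      rcases eq_or_ne y x with rfl | hy
      · simpa using hv
      · simpa [hy] using subset_convexHull ℝ _ (hF y).some_mem
    simpa using linearCombination_mem_Fhat hf (single x 1)

lemma Fhat_subset_Δf (hF : ∀ x, F x ⊆ Δf X) (hu : u ∈ Δf X) : Fhat F u ⊆ Δf X := by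
  rintro _ ⟨f, hf, rfl⟩
  exact linearCombination_mem_of_convex convex_Δf hu fun x =>
    convexHull_min (hF x) convex_Δf (hf x)

lemma rExt_le_rExt_of_mem_Fhat (hfg : ∀ x, ∀ v ∈ F x, rExt f v ≤ g x) (hu : u ∈ Δf X)
    (hv : v ∈ Fhat F u) : rExt f v ≤ rExt g u := by
  obtain ⟨e, he, rfl⟩ := hv
  refine (rExt_linearCombination f e u).trans_le (rExt_mono hu fun x => ?_)
  exact convexHull_min (hfg x) (convex_halfSpace_le (linearCombination ℝ f).isLinear _) (he x)

lemma smul_mem_Fhat (hv : v ∈ Fhat F u) (a : ℝ) : a • v ∈ Fhat F (a • u) := by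
  obtain ⟨f, hf, rfl⟩ := hv
  exact ⟨f, hf, ((linearCombination ℝ f).map_smul a u).symm⟩

lemma add_mem_Fhat (hu : ∀ x, 0 ≤ u x) (hu' : ∀ x, 0 ≤ u' x) (hv : v ∈ Fhat F u)
    (hv' : v' ∈ Fhat F u') : v + v' ∈ Fhat F (u + u') := by
  classical
  obtain ⟨f, hf, rfl⟩ := hv
  obtain ⟨f', hf', rfl⟩ := hv'
  choose g hg hgeq using fun x =>
    (convex_convexHull ℝ (F x)).exists_mem_add_smul_eq (hf x) (hf' x) (hu x) (hu' x)
  refine ⟨g, hg, ?_⟩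
  rw [sum_of_support_subset u (s := u.support ∪ u'.support) (by simp) _ (by simp),
    sum_of_support_subset u' (s := u.support ∪ u'.support) (by simp) _ (by simp),
    sum_of_support_subset (u + u') (s := u.support ∪ u'.support) support_add _ (by simp),
    ← Finset.sum_add_distrib]
  exact Finset.sum_congr rfl fun x _ => (hgeq x).symm

lemma convex_Fhat (hu : ∀ x, 0 ≤ u x) : Convex ℝ (Fhat F u) := by
  intro v hv v' hv' a b ha hb hab
  simpa only [Convex.combo_self hab] using add_mem_Fhat (fun x => mul_nonneg ha (hu x))
    (fun x => mul_nonneg hb (hu x)) (smul_mem_Fhat hv a) (smul_mem_Fhat hv' b)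

lemma sum_smul_mem_Fhat (hF : ∀ x, (F x).Nonempty) {ι : Type*} {s : Finset ι} {c : ι → ℝ}
    {w w' : ι → X →₀ ℝ} (hc : ∀ i ∈ s, 0 ≤ c i) (hw : ∀ i ∈ s, ∀ x, 0 ≤ w i x)
    (hw' : ∀ i ∈ s, w' i ∈ Fhat F (w i)) : ∑ i ∈ s, c i • w' i ∈ Fhat F (∑ i ∈ s, c i • w i) := by
  classical
  induction s using Finset.induction_on with
  | empty => exact ⟨_, fun x => subset_convexHull _ _ (hF x).some_mem, by simp⟩
  | insert i s hi ih =>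
    simp only [Finset.forall_mem_insert] at hc hw hw'
    rw [Finset.sum_insert hi, Finset.sum_insert hi]
    refine add_mem_Fhat (fun x => mul_nonneg hc.1 (hw.1 x)) (fun x => ?_)
      (smul_mem_Fhat hw'.1 (c i)) (ih hc.2 hw.2 hw'.2)
    rw [finsetSum_apply]
    exact Finset.sum_nonneg fun j hj => mul_nonneg (hc.2 j hj) (hw.2 j hj x)

lemma isPlayFrom_single (hF : ∀ x, (F x).Nonempty) :
    IsPlayFrom F (single x 1) σ ↔ IsPlay F x σ := by
  rw [IsPlayFrom, IsPlay, Fhat_single hF]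

lemma IsPlayFrom.mem_Δf (hF : ∀ x, F x ⊆ Δf X) (hσ : IsPlayFrom F u σ) (hu : u ∈ Δf X) (t : ℕ) :
    σ t ∈ Δf X := by
  induction t with
  | zero => exact Fhat_subset_Δf hF hu hσ.1
  | succ t ih => exact Fhat_subset_Δf hF ih (hσ.2 t)

lemma IsExcessive.rExt_le_of_isPlayFrom (hg : IsExcessive F g) (hF : ∀ x, F x ⊆ Δf X)
    (hσ : IsPlayFrom F u σ) (hu : u ∈ Δf X) (t : ℕ) : rExt g (σ t) ≤ rExt g u := by
  induction t with
  | zero => exact rExt_le_rExt_of_mem_Fhat hg hu hσ.1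
  | succ t ih => exact (rExt_le_rExt_of_mem_Fhat hg (hσ.mem_Δf hF hu t) (hσ.2 t)).trans ih

lemma IsPlayFrom.cons (hv : v ∈ Fhat F u) (hσ : IsPlayFrom F v σ) :
    IsPlayFrom F u fun t => t.casesOn v σ :=
  ⟨hv, fun t => by cases t with
    | zero => exact hσ.1
    | succ t => exact hσ.2 t⟩

lemma exists_isPlayFrom (hF : ∀ x, (F x).Nonempty) (u : X →₀ ℝ) : ∃ σ, IsPlayFrom F u σ := by
  choose next hnext using Fhat_nonempty hF
  exact ⟨fun t => next^[t + 1] u, hnext u, fun t => by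
    simpa only [Function.iterate_succ_apply' next (t + 1)] using hnext _⟩

lemma convex_setOf_isPlayFrom (hF : ∀ x, F x ⊆ Δf X) (hu : u ∈ Δf X) :
    Convex ℝ {σ | IsPlayFrom F u σ} := by
  intro σ hσ τ hτ a b ha hb hab
  refine ⟨convex_Fhat hu.1 hσ.1 hτ.1 ha hb hab, fun t => ?_⟩
  exact add_mem_Fhat (fun x => mul_nonneg ha ((hσ.mem_Δf hF hu t).1 x))
    (fun x => mul_nonneg hb ((hτ.mem_Δf hF hu t).1 x)) (smul_mem_Fhat (hσ.2 t) a)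
    (smul_mem_Fhat (hτ.2 t) b)

lemma linearCombination_mem_Fhat_linearCombination (hF : ∀ x, (F x).Nonempty) {w w' : X → X →₀ ℝ}
    (hu : ∀ x, 0 ≤ u x) (hw : ∀ x, w x ∈ Δf X) (hw' : ∀ x, w' x ∈ Fhat F (w x)) :
    linearCombination ℝ w' u ∈ Fhat F (linearCombination ℝ w u) :=
  sum_smul_mem_Fhat hF (fun x _ => hu x) (fun x _ => (hw x).1) fun x _ => hw' x

lemma linearCombination_play_apply (τ : X → ℕ → X →₀ ℝ) (u : X →₀ ℝ) (t : ℕ) :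
    linearCombination ℝ τ u t = linearCombination ℝ (fun x => τ x t) u :=
  Finset.sum_apply t u.support _

lemma isPlayFrom_linearCombination (hF : IsGamblingHouse F) (hu : u ∈ Δf X)
    {τ : X → ℕ → X →₀ ℝ} (hτ : ∀ x, IsPlay F x (τ x)) :
    IsPlayFrom F u (linearCombination ℝ τ u) := by
  have hτ' : ∀ x, IsPlayFrom F (single x 1) (τ x) := fun x =>
    (isPlayFrom_single hF.nonempty).2 (hτ x)
  refine ⟨?_, fun t => ?_⟩
  · have h := linearCombination_mem_Fhat_linearCombination hF.nonempty hu.1 single_mem_Δf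
      fun x => (hτ' x).1
    rwa [linearCombination_single_one, ← linearCombination_play_apply] at h
  · rw [linearCombination_play_apply, linearCombination_play_apply]
    exact linearCombination_mem_Fhat_linearCombination hF.nonempty hu.1
      (fun x => (hτ' x).mem_Δf hF.subset_Δf (single_mem_Δf x) t) fun x => (hτ x).2 t

lemma IsPlayFrom.exists_eq_linearCombination (hσ : IsPlayFrom F u σ) :
    ∃ τ : X → ℕ → X →₀ ℝ, (∀ x, IsPlay F x (τ x)) ∧ σ = linearCombination ℝ τ u := by
  obtain ⟨f, hf, hσ0⟩ := hσ.1
  choose g hg hσg using hσ.2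
  let τ : X → ℕ → X →₀ ℝ := fun x t => t.rec (f x) fun t v => linearCombination ℝ (g t) v
  refine ⟨τ, fun x => ⟨hf x, fun t => linearCombination_mem_Fhat (hg t) _⟩, funext fun t => ?_⟩
  rw [linearCombination_play_apply]
  induction t with
  | zero => exact hσ0
  | succ t ih => rw [hσg t, ih]; exact linearCombination_linearCombination ℝ _ _ _

end Plays

section Evaluation

variable {θ : ℕ → ℝ} {a b : ℕ → ℝ}

lemma IsEval.summable (hθ : IsEval θ) : Summable θ :=
  not_imp_comm.1 tsum_eq_zero_of_not_summable (by rw [hθ.2]; exact one_ne_zero)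

lemma IsEval.hasSum (hθ : IsEval θ) : HasSum θ 1 :=
  hθ.2 ▸ hθ.summable.hasSum

lemma IsEval.summable_mul (hθ : IsEval θ) (ha : ∀ t, a t ∈ Icc (0 : ℝ) 1) :
    Summable fun t => θ t * a t :=
  hθ.summable.of_nonneg_of_le (fun t => mul_nonneg (hθ.1 t) (ha t).1)
    fun t => mul_le_of_le_one_right (hθ.1 t) (ha t).2

lemma IsEval.tsum_mul_le_add (hθ : IsEval θ) (ha : ∀ t, a t ∈ Icc (0 : ℝ) 1)
    (hb : ∀ t, b t ∈ Icc (0 : ℝ) 1) {ε : ℝ} (hab : ∀ t, a t ≤ b t + ε) :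
    ∑' t, θ t * a t ≤ ∑' t, θ t * b t + ε := by
  have hbε := (hθ.summable_mul hb).hasSum.add (hθ.hasSum.mul_right ε)
  rw [one_mul] at hbε
  refine hasSum_le (fun t => ?_) (hθ.summable_mul ha).hasSum hbε
  rw [← mul_add]
  exact mul_le_mul_of_nonneg_left (hab t) (hθ.1 t)

lemma IsEval.tsum_mul_mem_Icc (hθ : IsEval θ) (ha : ∀ t, a t ∈ Icc (0 : ℝ) 1) :
    ∑' t, θ t * a t ∈ Icc (0 : ℝ) 1 :=
  ⟨tsum_nonneg fun t => mul_nonneg (hθ.1 t) (ha t).1,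
    hasSum_le (fun t => mul_le_of_le_one_right (hθ.1 t) (ha t).2)
      (hθ.summable_mul ha).hasSum hθ.hasSum⟩

lemma IsEval.summable_abs_sub (hθ : IsEval θ) : Summable fun t => |θ (t + 1) - θ t| :=
  (((summable_nat_add_iff 1).2 hθ.summable).sub hθ.summable).abs

lemma IsEval.sum_abs_sub_le (hθ : IsEval θ) (s : Finset ℕ) :
    ∑ t ∈ s, |θ (t + 1) - θ t| ≤ impatience θ :=
  hθ.summable_abs_sub.sum_le_tsum s fun _ _ => abs_nonneg _

lemma IsEval.le_impatience (hθ : IsEval θ) (t : ℕ) : θ t ≤ impatience θ := by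
  have htail : Tendsto (fun n => θ t - θ (n + t)) atTop (𝓝 (θ t - 0)) :=
    ((tendsto_add_atTop_iff_nat t).2 hθ.summable.tendsto_atTop_zero).const_sub _
  rw [sub_zero] at htail
  refine le_of_tendsto' htail fun n => ?_
  calc θ t - θ (n + t) ≤ |θ (n + t) - θ t| := by rw [abs_sub_comm]; exact le_abs_self _
    _ = |∑ i ∈ Finset.Ico t (n + t), (θ (i + 1) - θ i)| := by
        rw [Finset.sum_Ico_sub _ (Nat.le_add_left t n)]
    _ ≤ ∑ i ∈ Finset.Ico t (n + t), |θ (i + 1) - θ i| := Finset.abs_sum_le_sum_abs _ _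
    _ ≤ impatience θ := hθ.sum_abs_sub_le _

lemma IsEval.tsum_mul_le_tsum_succ_mul_add_impatience (hθ : IsEval θ)
    (ha : ∀ t, a t ∈ Icc (0 : ℝ) 1) :
    ∑' t, θ t * a t ≤ ∑' t, θ (t + 1) * a t + impatience θ := by
  have hsucc : Summable fun t => θ (t + 1) * a t :=
    ((summable_nat_add_iff 1).2 hθ.summable).of_nonneg_of_le
      (fun t => mul_nonneg (hθ.1 _) (ha t).1) fun t => mul_le_of_le_one_right (hθ.1 _) (ha t).2
  refine hasSum_le (fun t => ?_) (hθ.summable_mul ha).hasSum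
    (hsucc.hasSum.add hθ.summable_abs_sub.hasSum)
  calc θ t * a t = θ (t + 1) * a t + (θ t - θ (t + 1)) * a t := by ring
    _ ≤ θ (t + 1) * a t + |θ (t + 1) - θ t| * a t := by
        rw [abs_sub_comm]; gcongr
        · exact (ha t).1
        · exact le_abs_self _
    _ ≤ θ (t + 1) * a t + |θ (t + 1) - θ t| := by
        gcongr; exact mul_le_of_le_one_right (abs_nonneg _) (ha t).2

lemma sum_range_mul_sub_succ (θ a : ℕ → ℝ) (N : ℕ) :
    ∑ t ∈ Finset.range N, θ t * (a t - a (t + 1)) =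
      θ 0 * a 0 - θ N * a N + ∑ t ∈ Finset.range N, (θ (t + 1) - θ t) * a (t + 1) := by
  induction N with
  | zero => simp
  | succ n ih => rw [Finset.sum_range_succ, Finset.sum_range_succ, ih]; ring

lemma IsEval.abs_sum_range_mul_sub_succ_le (hθ : IsEval θ) {B : ℝ} (ha : ∀ t, |a t| ≤ B) (N : ℕ) :
    |∑ t ∈ Finset.range N, θ t * (a t - a (t + 1))| ≤ 3 * B * impatience θ := by
  have hB : 0 ≤ B := (abs_nonneg _).trans (ha 0)
  have hterm : ∀ t, |θ t * a t| ≤ impatience θ * B := fun t => by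
    rw [abs_mul, abs_of_nonneg (hθ.1 t)]
    gcongr
    · exact (hθ.1 t).trans (hθ.le_impatience t)
    · exact hθ.le_impatience t
    · exact ha t
  have hsum : |∑ t ∈ Finset.range N, (θ (t + 1) - θ t) * a (t + 1)| ≤ impatience θ * B :=
    calc _ ≤ ∑ t ∈ Finset.range N, |θ (t + 1) - θ t| * B :=
          (Finset.abs_sum_le_sum_abs _ _).trans <| Finset.sum_le_sum fun t _ => by
            rw [abs_mul]; gcongr; exact ha _
      _ ≤ impatience θ * B := by
          rw [← Finset.sum_mul]; gcongr; exact hθ.sum_abs_sub_le _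
  rw [sum_range_mul_sub_succ]
  linarith [abs_add_le (θ 0 * a 0 - θ N * a N)
      (∑ t ∈ Finset.range N, (θ (t + 1) - θ t) * a (t + 1)),
    abs_sub (θ 0 * a 0) (θ N * a N), hterm 0, hterm N]

lemma convex_setOf_isEval_impatience_le (α : ℝ) :
    Convex ℝ {θ | IsEval θ ∧ impatience θ ≤ α} := by
  rintro θ ⟨hθ, hθα⟩ η ⟨hη, hηα⟩ p q hp hq hpq
  have hmix : HasSum (p • θ + q • η) 1 := by
    have h := (hθ.hasSum.mul_left p).add (hη.hasSum.mul_left q)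
    rwa [mul_one, mul_one, hpq] at h
  have hmixEval : IsEval (p • θ + q • η) :=
    ⟨fun t => add_nonneg (mul_nonneg hp (hθ.1 t)) (mul_nonneg hq (hη.1 t)), hmix.tsum_eq⟩
  refine ⟨hmixEval, ?_⟩
  calc impatience (p • θ + q • η) ≤ p * impatience θ + q * impatience η := by
        refine hasSum_le (fun t => ?_) hmixEval.summable_abs_sub.hasSum
          ((hθ.summable_abs_sub.hasSum.mul_left p).add (hη.summable_abs_sub.hasSum.mul_left q))
        calc |(p • θ + q • η) (t + 1) - (p • θ + q • η) t|
            = |p * (θ (t + 1) - θ t) + q * (η (t + 1) - η t)| := by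
              simp only [Pi.add_apply, Pi.smul_apply, smul_eq_mul]; ring_nf
          _ ≤ p * |θ (t + 1) - θ t| + q * |η (t + 1) - η t| := by
              refine (abs_add_le _ _).trans_eq ?_
              rw [abs_mul, abs_mul, abs_of_nonneg hp, abs_of_nonneg hq]
    _ ≤ p * α + q * α := by gcongr
    _ = α := by rw [← add_mul, hpq, one_mul]

/-- The filter along which limit values are taken: `I(θ) → 0` among evaluations. -/
noncomputable def patient : Filter {θ : ℕ → ℝ // IsEval θ} :=
  comap (fun θ => impatience θ.1) (𝓝 0)

lemma eventually_patient_iff {p : {θ : ℕ → ℝ // IsEval θ} → Prop} :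
    (∀ᶠ θ in patient, p θ) ↔ ∃ α > 0, ∀ θ, impatience θ.1 ≤ α → p θ := by
  have hpos : ∀ θ, 0 ≤ impatience θ := fun θ => tsum_nonneg fun _ => abs_nonneg _
  rw [patient, ((Metric.nhds_basis_closedBall (x := (0 : ℝ))).comap _).eventually_iff]
  simp only [mem_preimage, Metric.mem_closedBall, dist_zero_right, Real.norm_eq_abs,
    abs_of_nonneg (hpos _)]

lemma tendsto_impatience_patient : Tendsto (fun θ => impatience θ.1) patient (𝓝 0) :=
  tendsto_comap

end Evaluation

section Value

variable {X : Type*} {F : X → Set (X →₀ ℝ)} {r : X → ℝ} {θ : ℕ → ℝ} {σ : ℕ → X →₀ ℝ} {u : X →₀ ℝ}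
  {x : X}

lemma IsPlay.mem_Δf (hF : IsGamblingHouse F) (hσ : IsPlay F x σ) (t : ℕ) : σ t ∈ Δf X :=
  ((isPlayFrom_single hF.nonempty).2 hσ).mem_Δf hF.subset_Δf (single_mem_Δf x) t

lemma payoff_mem_Icc (hr : ∀ x, r x ∈ Icc (0 : ℝ) 1) (hθ : IsEval θ) (hσ : ∀ t, σ t ∈ Δf X) :
    payoff r θ σ ∈ Icc (0 : ℝ) 1 :=
  hθ.tsum_mul_mem_Icc fun t => rExt_mem_of_convex (convex_Icc 0 1) (hσ t) hr

lemma payoff_le_value (hF : IsGamblingHouse F) (hr : ∀ x, r x ∈ Icc (0 : ℝ) 1) (hθ : IsEval θ)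
    (hσ : IsPlay F x σ) : payoff r θ σ ≤ value F r θ x :=
  le_csSup ⟨1, by rintro _ ⟨τ, hτ, rfl⟩; exact (payoff_mem_Icc hr hθ (hτ.mem_Δf hF)).2⟩ ⟨σ, hσ, rfl⟩

lemma exists_isPlay (hF : ∀ x, (F x).Nonempty) (x : X) : ∃ σ, IsPlay F x σ :=
  (exists_isPlayFrom hF (single x 1)).imp fun _ => (isPlayFrom_single hF).1

lemma value_le (hF : ∀ x, (F x).Nonempty) {c : ℝ} (h : ∀ σ, IsPlay F x σ → payoff r θ σ ≤ c) :
    value F r θ x ≤ c := by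
  obtain ⟨σ, hσ⟩ := exists_isPlay hF x
  exact csSup_le ⟨_, σ, hσ, rfl⟩ (by rintro _ ⟨τ, hτ, rfl⟩; exact h τ hτ)

lemma exists_isPlay_lt_payoff (hF : ∀ x, (F x).Nonempty) {c : ℝ} (hc : c < value F r θ x) :
    ∃ σ, IsPlay F x σ ∧ c < payoff r θ σ := by
  contrapose! hc
  exact value_le hF hc

lemma value_mem_Icc (hF : IsGamblingHouse F) (hr : ∀ x, r x ∈ Icc (0 : ℝ) 1) (hθ : IsEval θ)
    (x : X) : value F r θ x ∈ Icc (0 : ℝ) 1 := by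
  obtain ⟨σ, hσ⟩ := exists_isPlay hF.nonempty x
  exact ⟨(payoff_mem_Icc hr hθ (hσ.mem_Δf hF)).1.trans (payoff_le_value hF hr hθ hσ),
    value_le hF.nonempty fun τ hτ => (payoff_mem_Icc hr hθ (hτ.mem_Δf hF)).2⟩

lemma payoff_linearCombination (hr : ∀ x, r x ∈ Icc (0 : ℝ) 1) (hθ : IsEval θ)
    {τ : X → ℕ → X →₀ ℝ} (hτ : ∀ x t, τ x t ∈ Δf X) (u : X →₀ ℝ) :
    payoff r θ (linearCombination ℝ τ u) = rExt (fun x => payoff r θ (τ x)) u := by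
  have hsum : ∀ x, HasSum (fun t => θ t * rExt r (τ x t)) (payoff r θ (τ x)) := fun x =>
    (hθ.summable_mul fun t => rExt_mem_of_convex (convex_Icc 0 1) (hτ x t) hr).hasSum
  have hmix := (hasSum_sum (s := u.support) fun x _ => (hsum x).mul_left (u x)).tsum_eq
  refine Eq.trans (tsum_congr fun t => ?_) hmix
  rw [linearCombination_play_apply, rExt_linearCombination, rExt, Finsupp.sum, Finset.mul_sum]
  exact Finset.sum_congr rfl fun x _ => mul_left_comm _ _ _

lemma payoff_le_rExt_value (hF : IsGamblingHouse F) (hr : ∀ x, r x ∈ Icc (0 : ℝ) 1)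
    (hθ : IsEval θ) (hu : u ∈ Δf X) (hσ : IsPlayFrom F u σ) :
    payoff r θ σ ≤ rExt (value F r θ) u := by
  obtain ⟨τ, hτ, rfl⟩ := hσ.exists_eq_linearCombination
  rw [payoff_linearCombination hr hθ fun x => (hτ x).mem_Δf hF]
  exact rExt_mono hu fun x => payoff_le_value hF hr hθ (hτ x)

lemma exists_isPlayFrom_rExt_value_le (hF : IsGamblingHouse F) (hr : ∀ x, r x ∈ Icc (0 : ℝ) 1)
    (hθ : IsEval θ) (hu : u ∈ Δf X) {ε : ℝ} (hε : 0 < ε) :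
    ∃ σ, IsPlayFrom F u σ ∧ rExt (value F r θ) u - ε ≤ payoff r θ σ := by
  choose τ hτ hτε using fun x =>
    exists_isPlay_lt_payoff hF.nonempty (sub_lt_self (value F r θ x) hε)
  refine ⟨_, isPlayFrom_linearCombination hF hu hτ, ?_⟩
  rw [payoff_linearCombination hr hθ fun x => (hτ x).mem_Δf hF, ← rExt_sub_const hu]
  exact rExt_mono hu fun x => (hτε x).le

lemma rExt_value_le_value_add_impatience (hF : IsGamblingHouse F)
    (hr : ∀ x, r x ∈ Icc (0 : ℝ) 1) (hθ : IsEval θ) (hu : u ∈ F x) :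
    rExt (value F r θ) u ≤ value F r θ x + impatience θ := by
  have huΔ := hF.subset_Δf x hu
  refine le_of_forall_pos_le_add fun ε hε => ?_
  obtain ⟨σ, hσ, hσε⟩ := exists_isPlayFrom_rExt_value_le hF hr hθ huΔ hε
  let τ : ℕ → X →₀ ℝ := fun t => t.casesOn u σ
  have hu' : u ∈ Fhat F (single x 1) := by
    rw [Fhat_single hF.nonempty]; exact subset_convexHull ℝ _ hu
  have hτ : IsPlay F x τ := (isPlayFrom_single hF.nonempty).1 (hσ.cons hu')
  have hσr : ∀ t, rExt r (σ t) ∈ Icc (0 : ℝ) 1 := fun t =>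
    rExt_mem_of_convex (convex_Icc 0 1) (hσ.mem_Δf hF.subset_Δf huΔ t) hr
  have hτr : ∀ t, rExt r (τ t) ∈ Icc (0 : ℝ) 1 := fun t =>
    rExt_mem_of_convex (convex_Icc 0 1) (hτ.mem_Δf hF t) hr
  have htail : ∑' t, θ (t + 1) * rExt r (σ t) ≤ payoff r θ τ := by
    rw [payoff, (hθ.summable_mul hτr).tsum_eq_zero_add]
    exact le_add_of_nonneg_left (mul_nonneg (hθ.1 0) (hτr 0).1)
  have hshift := hθ.tsum_mul_le_tsum_succ_mul_add_impatience hσr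
  have hvalue := payoff_le_value hF hr hθ hτ
  rw [payoff] at hσε
  linarith

end Value

section Measures

variable {X : Type*} [MeasurableSpace X] {u v : X →₀ ℝ}

lemma toMeas_single (x : X) : toMeas (single x 1) = Measure.dirac x := by
  simp [toMeas]

lemma toMeas_smul_add_smul (hu : ∀ x, 0 ≤ u x) (hv : ∀ x, 0 ≤ v x) {a b : ℝ} (ha : 0 ≤ a)
    (hb : 0 ≤ b) :
    toMeas (a • u + b • v) = ENNReal.ofReal a • toMeas u + ENNReal.ofReal b • toMeas v := by
  classical
  rw [toMeas, toMeas, toMeas,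
    sum_of_support_subset u (s := u.support ∪ v.support) (by simp) _ (by simp),
    sum_of_support_subset v (s := u.support ∪ v.support) (by simp) _ (by simp),
    sum_of_support_subset (a • u + b • v) (s := u.support ∪ v.support)
      (support_add.trans (Finset.union_subset_union support_smul support_smul)) _ (by simp),
    Finset.smul_sum, Finset.smul_sum, ← Finset.sum_add_distrib]
  refine Finset.sum_congr rfl fun x _ => ?_
  rw [Finsupp.add_apply, Finsupp.smul_apply, Finsupp.smul_apply, smul_eq_mul, smul_eq_mul,
    ENNReal.ofReal_add (mul_nonneg ha (hu x)) (mul_nonneg hb (hv x)), ENNReal.ofReal_mul ha,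
    ENNReal.ofReal_mul hb, add_smul, mul_smul, mul_smul]

lemma isProbabilityMeasure_toMeas (hu : u ∈ Δf X) : IsProbabilityMeasure (toMeas u) := by
  constructor
  simp only [toMeas, Finsupp.sum, Measure.finsetSum_apply, Measure.smul_apply, measure_univ,
    smul_eq_mul, mul_one]
  rw [← ENNReal.ofReal_sum_of_nonneg fun x _ => hu.1 x, ← ENNReal.ofReal_one]
  exact congrArg ENNReal.ofReal hu.2

/-- The element of `Δ(X)` given by a finitely supported probability. -/
noncomputable def finProba (u : X →₀ ℝ) (hu : u ∈ Δf X) : ProbabilityMeasure X :=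
  ⟨toMeas u, isProbabilityMeasure_toMeas hu⟩

lemma finProba_single (x : X) : finProba (single x 1) (single_mem_Δf x) = diracProba x :=
  Subtype.ext (toMeas_single x)

lemma IsAffine.apply_finProba {w : ProbabilityMeasure X → ℝ} (hw : IsAffine w) (hu : u ∈ Δf X) :
    w (finProba u hu) = rExt (fun x => w (diracProba x)) u := by
  let s : Set (X →₀ ℝ) :=
    {v | ∃ hv : v ∈ Δf X, w (finProba v hv) = rExt (fun x => w (diracProba x)) v}
  have hs : Convex ℝ s := by
    rintro v ⟨hv, hwv⟩ v' ⟨hv', hwv'⟩ a b ha hb hab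
    obtain rfl : b = 1 - a := by linarith
    refine ⟨convex_Δf hv hv' ha hb hab, ?_⟩
    rw [hw (finProba v hv) (finProba v' hv') (finProba _ _) a ⟨ha, by linarith⟩
      (toMeas_smul_add_smul hv.1 hv'.1 ha hb), hwv, hwv']
    simp only [rExt_eq_linearCombination, map_add, map_smul, smul_eq_mul]
  have hsingle : ∀ x, single x 1 ∈ s := fun x =>
    ⟨single_mem_Δf x, by rw [finProba_single, rExt_single]⟩
  have hmem := linearCombination_mem_of_convex hs hu hsingle
  rw [linearCombination_single_one] at hmem
  exact hmem.2

variable [TopologicalSpace X] [OpensMeasurableSpace X] {f : X → ℝ}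

lemma integral_diracProba (hf : Continuous f) (x : X) :
    ∫ y, f y ∂(diracProba x : Measure X) = f x :=
  integral_dirac' f x hf.stronglyMeasurable

variable [CompactSpace X]

lemma integrable_of_continuous (hf : Continuous f) (μ : ProbabilityMeasure X) :
    Integrable f (μ : Measure X) := by
  obtain ⟨C, hC⟩ := isCompact_univ.exists_bound_of_continuousOn hf.continuousOn
  exact (integrable_const C).mono' hf.aestronglyMeasurable
    (Eventually.of_forall fun x => hC x trivial)

lemma continuous_integral (hf : Continuous f) :
    Continuous fun μ : ProbabilityMeasure X => ∫ x, f x ∂(μ : Measure X) :=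
  ProbabilityMeasure.continuous_integral_continuousMap (⟨f, hf⟩ : C(X, ℝ))

lemma isAffine_integral (hf : Continuous f) :
    IsAffine fun μ : ProbabilityMeasure X => ∫ x, f x ∂(μ : Measure X) := by
  intro μ ν m a ha hm
  dsimp only
  rw [hm, integral_add_measure, integral_smul_measure, integral_smul_measure,
    ENNReal.toReal_ofReal ha.1, ENNReal.toReal_ofReal (sub_nonneg.2 ha.2), smul_eq_mul, smul_eq_mul]
  · exact (integrable_of_continuous hf μ).smul_measure ENNReal.ofReal_ne_top
  · exact (integrable_of_continuous hf ν).smul_measure ENNReal.ofReal_ne_top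

lemma integral_finProba (hf : Continuous f) (hu : u ∈ Δf X) :
    ∫ x, f x ∂(finProba u hu : Measure X) = rExt f u := by
  rw [(isAffine_integral hf).apply_finProba hu]
  simp only [integral_diracProba hf]

end Measures

section Minimax

lemma nonpos_of_forall_add_mul_le {a b m : ℝ} (h : ∀ s ≥ 0, a + s * m ≤ b) : m ≤ 0 := by
  by_contra! hm
  have hs := h ((|b - a| + 1) / m) (by positivity)
  rw [div_mul_cancel₀ _ hm.ne'] at hs
  linarith [le_abs_self (b - a)]

variable {ι : Type*}

lemma forall_le_of_forall_lt (f : (ι → ℝ) →L[ℝ] ℝ) {b c : ℝ}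
    (h : ∀ y : ι → ℝ, (∀ i, c < y i) → f y ≤ b) {y : ι → ℝ} (hy : ∀ i, c ≤ y i) : f y ≤ b := by
  have hlim : Tendsto (fun ε : ℝ => f (fun i => y i + ε)) (𝓝[>] 0) (𝓝 (f y)) := by
    have hcont : Continuous fun ε : ℝ => f (fun i => y i + ε) := by fun_prop
    simpa using (hcont.tendsto 0).mono_left nhdsWithin_le_nhds
  refine le_of_tendsto hlim ?_
  filter_upwards [self_mem_nhdsWithin] with ε hε
  exact h _ fun i => (hy i).trans_lt (lt_add_of_pos_right _ hε)

variable [Fintype ι] {K : Set (ι → ℝ)} {c : ℝ}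

lemma exists_nonneg_forall_sum_mul_le (hK : Convex ℝ K) (hne : K.Nonempty)
    (h : ∀ y ∈ K, ∃ i, y i ≤ c) :
    ∃ p : ι → ℝ, 0 ≤ p ∧ p ≠ 0 ∧ ∀ y ∈ K, ∑ i, p i * y i ≤ (∑ i, p i) * c := by
  classical
  have hdisj : Disjoint (univ.pi fun _ : ι => Ioi c) K := Set.disjoint_left.2 fun y hy hyK =>
    (h y hyK).elim fun i hi => hi.not_gt (hy i trivial)
  obtain ⟨f, b, hfO, hfK⟩ := geometric_hahn_banach_open (convex_pi fun _ _ => convex_Ioi c)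
    (isOpen_set_pi finite_univ fun _ _ => isOpen_Ioi) hK hdisj
  have hf_le : ∀ y : ι → ℝ, (∀ i, c ≤ y i) → f y ≤ b := fun y =>
    forall_le_of_forall_lt f fun z hz => (hfO z fun i _ => hz i).le
  have hf : ∀ y, ∑ i, -f (Pi.single i 1) * y i = -f y := fun y => by
    conv_rhs => rw [← Finset.univ_sum_single y, map_sum, ← Finset.sum_neg_distrib]
    refine Finset.sum_congr rfl fun i _ => ?_
    rw [neg_mul, mul_comm, ← smul_eq_mul, ← map_smul, ← Pi.single_smul, smul_eq_mul, mul_one]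
  refine ⟨fun i => -f (Pi.single i 1), fun i => ?_, fun hzero => ?_, fun y hy => ?_⟩
  · refine neg_nonneg.2 <| nonpos_of_forall_add_mul_le (a := f fun _ => c) (b := b) fun s hs => ?_
    rw [← smul_eq_mul, ← map_smul, ← map_add]
    have hsingle : (0 : ι → ℝ) ≤ Pi.single i 1 := Pi.single_nonneg.2 zero_le_one
    exact hf_le _ fun j => le_add_of_nonneg_right (mul_nonneg hs (hsingle j))
  · have hf0 : ∀ y, f y = 0 := fun y => by
      rw [← neg_eq_zero, ← hf]
      exact Finset.sum_eq_zero fun i _ => by rw [congrFun hzero i, Pi.zero_apply, zero_mul]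
    have hlt := (hfO (fun _ => c + 1) fun i _ => lt_add_one c).trans_le (hfK _ hne.some_mem)
    rw [hf0, hf0] at hlt
    exact hlt.false
  · rw [Finset.sum_mul, hf, hf fun _ => c, neg_le_neg_iff]
    exact (hf_le _ fun _ => le_rfl).trans (hfK y hy)

lemma exists_mem_stdSimplex_forall_sum_mul_le (hK : Convex ℝ K) (hne : K.Nonempty)
    (h : ∀ y ∈ K, ∃ i, y i ≤ c) : ∃ l ∈ stdSimplex ℝ ι, ∀ y ∈ K, ∑ i, l i * y i ≤ c := by
  obtain ⟨p, hp, hp0, hpK⟩ := exists_nonneg_forall_sum_mul_le hK hne h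
  have hsum : 0 < ∑ i, p i := Fintype.sum_pos (hp.lt_of_ne' hp0)
  refine ⟨fun i => p i / ∑ j, p j, ⟨fun i => div_nonneg (hp i) hsum.le, ?_⟩, fun y hy => ?_⟩
  · rw [← Finset.sum_div, div_self hsum.ne']
  · simp only [div_mul_eq_mul_div]
    rw [← Finset.sum_div, div_le_iff₀' hsum]
    exact hpK y hy

lemma exists_forall_lt_of_concaveOn {E : Type*} [AddCommMonoid E] [SMul ℝ E] {s : Set E}
    (hs : s.Nonempty) {φ : ι → E → ℝ} (hφ : ∀ i, ConcaveOn ℝ s (φ i))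
    (h : ∀ l ∈ stdSimplex ℝ ι, ∃ v ∈ s, c < ∑ i, l i * φ i v) : ∃ v ∈ s, ∀ i, c < φ i v := by
  by_contra! hcon
  let K : Set (ι → ℝ) := {y | ∃ v ∈ s, ∀ i, y i ≤ φ i v}
  have hK : Convex ℝ K := by
    rcases isEmpty_or_nonempty ι with _ | ⟨⟨i₀⟩⟩
    · exact Set.subsingleton_of_subsingleton.convex
    rintro y ⟨v, hv, hy⟩ z ⟨w, hw, hz⟩ a b ha hb hab
    refine ⟨a • v + b • w, (hφ i₀).1 hv hw ha hb hab, fun i => ?_⟩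
    refine le_trans ?_ ((hφ i).2 hv hw ha hb hab)
    exact add_le_add (mul_le_mul_of_nonneg_left (hy i) ha) (mul_le_mul_of_nonneg_left (hz i) hb)
  have hmem : ∀ v ∈ s, (fun i => φ i v) ∈ K := fun v hv => ⟨v, hv, fun _ => le_rfl⟩
  have hK_le : ∀ y ∈ K, ∃ i, y i ≤ c := fun y ⟨v, hv, hy⟩ =>
    (hcon v hv).imp fun i hi => (hy i).trans hi
  obtain ⟨l, hl, hlK⟩ :=
    exists_mem_stdSimplex_forall_sum_mul_le hK ⟨_, hmem _ hs.some_mem⟩ hK_le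
  obtain ⟨v, hv, hlt⟩ := h l hl
  exact (hlK _ (hmem v hv)).not_gt hlt

end Minimax

section Lipschitz

variable {X : Type*} [MetricSpace X] {f : X → ℝ}

lemma lipschitzWith_one_iff_le_add : LipschitzWith 1 f ↔ ∀ x y, f x ≤ f y + dist x y :=
  ⟨fun h x y => by simpa using h.le_add_mul x y, LipschitzWith.of_le_add⟩

lemma convex_setOf_lipschitzWith_one : Convex ℝ {f : X → ℝ | LipschitzWith 1 f} := by
  intro f hf g hg a b ha hb hab
  simp only [mem_ofPred_eq, lipschitzWith_one_iff_le_add, Pi.add_apply, Pi.smul_apply,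
    smul_eq_mul] at hf hg ⊢
  intro x y
  calc a * f x + b * g x ≤ a * (f y + dist x y) + b * (g y + dist x y) :=
        add_le_add (mul_le_mul_of_nonneg_left (hf x y) ha) (mul_le_mul_of_nonneg_left (hg x y) hb)
    _ = a * f y + b * g y + (a + b) * dist x y := by ring
    _ = a * f y + b * g y + dist x y := by rw [hab, one_mul]

variable [CompactSpace X]

lemma dist_le_diam_univ (x y : X) : dist x y ≤ Metric.diam (univ : Set X) :=
  Metric.dist_le_diam_of_mem isCompact_univ.isBounded trivial trivial

lemma exists_lipschitzWith_dist_lt (hf : Continuous f) {ε : ℝ} (hε : 0 < ε) :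
    ∃ (C : NNReal) (g : X → ℝ), LipschitzWith C g ∧ ∀ x, |f x - g x| < ε := by
  let L : Set C(X, ℝ) := {g | ∃ C, LipschitzWith C g}
  have hsep : L.SeparatesPointsStrongly := by
    intro v x y
    rcases eq_or_ne x y with rfl | hxy
    · exact ⟨.const X (v x), ⟨0, LipschitzWith.const _⟩, rfl, rfl⟩
    let φ : ℝ → ℝ := fun s => v x + (v y - v x) / dist x y * s
    have hφ : LipschitzWith ‖(v y - v x) / dist x y‖₊ φ := by
      simpa using (LipschitzWith.const (v x)).add (lipschitzWith_smul ((v y - v x) / dist x y))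
    have hg := hφ.comp (LipschitzWith.dist_right x)
    refine ⟨⟨_, hg.continuous⟩, ⟨_, hg⟩, by simp [φ], ?_⟩
    simp [φ, div_mul_cancel₀ _ (dist_ne_zero.2 hxy)]
  have hdense := ContinuousMap.sublattice_closure_eq_top L ⟨0, 0, LipschitzWith.const _⟩
    (fun g ⟨C, hg⟩ h ⟨D, hh⟩ => ⟨_, hg.min hh⟩) (fun g ⟨C, hg⟩ h ⟨D, hh⟩ => ⟨_, hg.max hh⟩) hsep
  have hmem : (⟨f, hf⟩ : C(X, ℝ)) ∈ closure L := hdense ▸ trivial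
  obtain ⟨g, ⟨C, hg⟩, hfg⟩ := Metric.mem_closure_iff.1 hmem ε hε
  exact ⟨C, g, hg, (ContinuousMap.dist_lt_iff hε).1 hfg⟩

lemma exists_finite_lipschitzWith_one_approx (x₀ : X) {ε : ℝ} (hε : 0 < ε) :
    ∃ t : Set (X → ℝ), t.Finite ∧ (∀ g ∈ t, LipschitzWith 1 g) ∧
      ∀ f, LipschitzWith 1 f → ∃ g ∈ t, ∀ x, |f x - f x₀ - g x| ≤ ε := by
  let S : Set (BoundedContinuousFunction X ℝ) := {f | LipschitzWith 1 f ∧ f x₀ = 0}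
  have hcompact : IsCompact (closure S) := by
    refine BoundedContinuousFunction.arzela_ascoli
      (Icc (-Metric.diam (univ : Set X)) (Metric.diam (univ : Set X))) isCompact_Icc _ ?_ ?_
    · rintro f x ⟨hf, hf0⟩
      have hfx := hf.dist_le_mul x x₀
      rw [hf0, Real.dist_eq, sub_zero, NNReal.coe_one, one_mul] at hfx
      exact abs_le.1 (hfx.trans (dist_le_diam_univ x x₀))
    · exact (LipschitzWith.uniformEquicontinuous _ 1 fun f => f.2.1).equicontinuous
  obtain ⟨t, htS, htfin, htcover⟩ := Metric.finite_approx_of_totallyBounded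
    (hcompact.totallyBounded.subset subset_closure) ε hε
  refine ⟨_, htfin.image (⇑), forall_mem_image.2 fun g hg => (htS hg).1, fun f hf => ?_⟩
  have hf₀ : LipschitzWith 1 fun x => f x - f x₀ := by
    simpa [lipschitzWith_one_iff_le_add, sub_add_eq_add_sub] using hf
  let f₀ := BoundedContinuousFunction.mkOfCompact ⟨_, hf₀.continuous⟩
  obtain ⟨g, hgt, hg⟩ := mem_iUnion₂.1 (htcover (show f₀ ∈ S from ⟨hf₀, sub_self _⟩))
  exact ⟨g, mem_image_of_mem _ hgt, fun x =>
    (BoundedContinuousFunction.dist_coe_le_dist x).trans (Metric.mem_ball.1 hg).le⟩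

end Lipschitz

/-- `d_KR(μ, u) ≤ η` for a probability `μ` and a finitely supported `u`, through the test functions
defining the Kantorovich–Rubinstein distance. -/
def IsKRClose {X : Type*} [MetricSpace X] [MeasurableSpace X] (μ : ProbabilityMeasure X)
    (u : X →₀ ℝ) (η : ℝ) : Prop :=
  ∀ f : X → ℝ, LipschitzWith 1 f → ∫ x, f x ∂(μ : Measure X) ≤ rExt f u + η

section KantorovichRubinstein

variable {X : Type*} [MetricSpace X] {u v : X →₀ ℝ} {f g : X → ℝ} {η : ℝ}

lemma isKRClose_diracProba_single [MeasurableSpace X] [BorelSpace X] (x y : X) :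
    IsKRClose (diracProba x) (single y 1) (dist x y) := fun f hf => by
  rw [integral_diracProba hf.continuous, rExt_single]
  exact lipschitzWith_one_iff_le_add.1 hf x y

variable [CompactSpace X]

lemma rExt_sub_le_dKR (hu : u ∈ Δf X) (hv : v ∈ Δf X) (hf : LipschitzWith 1 f) :
    rExt f u - rExt f v ≤ dKR u v := by
  refine le_csSup ⟨Metric.diam (univ : Set X), ?_⟩ ⟨f, hf, rfl⟩
  rintro _ ⟨g, hg, rfl⟩
  have hosc : ∀ x y, g x - Metric.diam (univ : Set X) ≤ g y := fun x y =>
    sub_le_iff_le_add.2 <| (lipschitzWith_one_iff_le_add.1 hg x y).trans <|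
      add_le_add_right (dist_le_diam_univ x y) _
  have hle : ∀ y, rExt g u - Metric.diam (univ : Set X) ≤ g y := fun y => by
    rw [← rExt_sub_const hu]
    exact rExt_mem_of_convex (convex_Iic _) hu fun x => hosc x y
  exact sub_le_comm.1 (rExt_mem_of_convex (convex_Ici _) hv hle)

variable [MeasurableSpace X] [BorelSpace X] {μ : ProbabilityMeasure X}

lemma integral_sub_const (hf : Continuous f) (μ : ProbabilityMeasure X) (c : ℝ) :
    ∫ x, (f x - c) ∂(μ : Measure X) = ∫ x, f x ∂(μ : Measure X) - c := by
  rw [integral_sub (integrable_of_continuous hf μ) (integrable_const c), integral_const,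
    probReal_univ, one_smul]

lemma integral_le_rExt_add_of_abs_sub_le (hf : Continuous f) (hg : Continuous g) (hu : u ∈ Δf X)
    {ε : ℝ} (hfg : ∀ x, |f x - g x| ≤ ε) (hgη : ∫ x, g x ∂(μ : Measure X) ≤ rExt g u + η) :
    ∫ x, f x ∂(μ : Measure X) ≤ rExt f u + η + 2 * ε := by
  have hfμ : ∫ x, (f x - ε) ∂(μ : Measure X) ≤ ∫ x, g x ∂(μ : Measure X) :=
    integral_mono (integrable_of_continuous (hf.sub continuous_const) μ)
      (integrable_of_continuous hg μ) fun x => by linarith [(abs_le.1 (hfg x)).2]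
  rw [integral_sub_const hf] at hfμ
  linarith [(abs_le.1 (abs_rExt_sub_le hu hfg)).1]

lemma exists_pos_forall_isKRClose_integral_le (hf : Continuous f) {ε : ℝ} (hε : 0 < ε) :
    ∃ η > 0, ∀ (μ : ProbabilityMeasure X), ∀ u ∈ Δf X, IsKRClose μ u η →
      ∫ x, f x ∂(μ : Measure X) ≤ rExt f u + ε := by
  obtain ⟨C, g, hg, hfg⟩ := exists_lipschitzWith_dist_lt hf (show 0 < ε / 3 by positivity)
  have hC : (0 : ℝ) < C + 1 := by positivity
  refine ⟨ε / 3 / (C + 1), by positivity, fun μ u hu h => ?_⟩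
  have hg' : LipschitzWith 1 fun x => (C + 1 : ℝ)⁻¹ * g x :=
    lipschitzWith_one_iff_le_add.2 fun x y => by
      rw [inv_mul_le_iff₀ hC, mul_add, mul_inv_cancel_left₀ hC.ne', add_mul, one_mul]
      linarith [hg.le_add_mul x y, dist_nonneg (x := x) (y := y)]
  have hgμ : ∫ x, g x ∂(μ : Measure X) ≤ rExt g u + ε / 3 := by
    have hscale : rExt (fun x => (C + 1 : ℝ)⁻¹ * g x) u = (C + 1 : ℝ)⁻¹ * rExt g u := by
      simp only [rExt, Finsupp.mul_sum, mul_left_comm]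
    have h' := h _ hg'
    rwa [hscale, integral_const_mul, inv_mul_le_iff₀ hC, mul_add, mul_inv_cancel_left₀ hC.ne',
      mul_div_cancel₀ _ hC.ne'] at h'
  linarith [integral_le_rExt_add_of_abs_sub_le hf hg.continuous hu (fun x => (hfg x).le) hgμ]

lemma exists_isKRClose_of_convex {K : Set (X →₀ ℝ)} (hK : Convex ℝ K) (hKΔ : K ⊆ Δf X) {η' : ℝ}
    (h : ∀ f, LipschitzWith 1 f → ∃ v ∈ K, ∫ x, f x ∂(μ : Measure X) ≤ rExt f v + η)
    (hη : η < η') : ∃ v ∈ K, IsKRClose μ v η' := by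
  obtain ⟨x₀⟩ := μ.nonempty
  obtain ⟨t, htfin, ht, htapprox⟩ :=
    exists_finite_lipschitzWith_one_approx x₀ (show 0 < (η' - η) / 4 by linarith)
  have := htfin.fintype
  have hne : K.Nonempty := (h (fun _ => 0) (LipschitzWith.const' 0)).imp fun _ => And.left
  have hmix : ∀ l ∈ stdSimplex ℝ t, ∃ v ∈ K,
      -((η + η') / 2) < ∑ g, l g * (rExt g.1 v - ∫ x, g.1 x ∂(μ : Measure X)) := by
    intro l hl
    have hf : LipschitzWith 1 fun x => ∑ g, l g * g.1 x := by
      rw [show (fun x => ∑ g, l g * g.1 x) = ∑ g, l g • g.1 by ext; simp]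
      exact convex_setOf_lipschitzWith_one.sum_mem (fun g _ => hl.1 g) hl.2 fun g _ => ht g.1 g.2
    obtain ⟨v, hv, hvf⟩ := h _ hf
    rw [rExt_sum_mul, integral_finsetSum _ fun g _ =>
      (integrable_of_continuous (ht g.1 g.2).continuous μ).const_mul _] at hvf
    simp only [integral_const_mul] at hvf
    refine ⟨v, hv, ?_⟩
    simp only [mul_sub, Finset.sum_sub_distrib]
    linarith
  have hconcave : ∀ g : t, ConcaveOn ℝ K fun v => rExt g.1 v - ∫ x, g.1 x ∂(μ : Measure X) :=
    fun g => ((linearCombination ℝ g.1).concaveOn hK).add_const (-_)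
  obtain ⟨v, hv, hvt⟩ := exists_forall_lt_of_concaveOn hne hconcave hmix
  refine ⟨v, hv, fun f hf => ?_⟩
  obtain ⟨g, hgt, hfg⟩ := htapprox f hf
  have hfv := integral_le_rExt_add_of_abs_sub_le (f := fun x => f x - f x₀) (μ := μ)
    (η := (η + η') / 2) (hf.continuous.sub continuous_const) (ht g hgt).continuous (hKΔ hv) hfg
    (by linarith [hvt ⟨g, hgt⟩])
  rw [integral_sub_const hf.continuous, rExt_sub_const (hKΔ hv)] at hfv
  linarith

end KantorovichRubinstein

/-- `F` is non-expansive for the Kantorovich–Rubinstein distance. -/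
def IsNonexpansive {X : Type*} [MetricSpace X] (F : X → Set (X →₀ ℝ)) : Prop :=
  ∀ x x', ∀ u ∈ F x, ∃ u' ∈ F x', dKR u u' ≤ dist x x'

/-- The optimal expectation of `f` after one stage, as a function of the current state. -/
noncomputable def oneStep {X : Type*} (F : X → Set (X →₀ ℝ)) (f : X → ℝ) (x : X) : ℝ :=
  sSup (rExt f '' F x)

/-- The closure of the graph of the mixed extension in `Δ(X) × Δ(X)`, whose diagonal is the set of
invariant measures. -/
def graphClosure {X : Type*} [TopologicalSpace X] [MeasurableSpace X] [OpensMeasurableSpace X]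
    (F : X → Set (X →₀ ℝ)) : Set (ProbabilityMeasure X × ProbabilityMeasure X) :=
  closure {p | ∃ u v : X →₀ ℝ, u ∈ Δf X ∧ v ∈ Fhat F u ∧
    (p.1 : Measure X) = toMeas u ∧ (p.2 : Measure X) = toMeas v}

/-- Plays from `μ` in the game on `Δ(X)` whose transitions are the closure of the graph of the
mixed extension. -/
def IsLimitPlay {X : Type*} [TopologicalSpace X] [MeasurableSpace X] [OpensMeasurableSpace X]
    (F : X → Set (X →₀ ℝ)) (μ : ProbabilityMeasure X) (ν : ℕ → ProbabilityMeasure X) : Prop :=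
  (μ, ν 0) ∈ graphClosure F ∧ ∀ t, (ν t, ν (t + 1)) ∈ graphClosure F

section LimitPlays

variable {X : Type*} [TopologicalSpace X] [MeasurableSpace X] [OpensMeasurableSpace X]
  {F : X → Set (X →₀ ℝ)} {u v : X →₀ ℝ}

lemma mem_graphClosure_finProba (hu : u ∈ Δf X) (hv : v ∈ Δf X) (huv : v ∈ Fhat F u) :
    (finProba u hu, finProba v hv) ∈ graphClosure F :=
  subset_closure ⟨u, v, hu, huv, rfl, rfl⟩

lemma IsPlay.isLimitPlay_finProba (hF : IsGamblingHouse F) {σ : ℕ → X →₀ ℝ} {x : X}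
    (hσ : IsPlay F x σ) :
    IsLimitPlay F (diracProba x) fun t => finProba (σ t) (hσ.mem_Δf hF t) := by
  refine ⟨?_, fun t => mem_graphClosure_finProba _ _ (hσ.2 t)⟩
  rw [← finProba_single]
  exact mem_graphClosure_finProba _ _ ((isPlayFrom_single hF.nonempty).2 hσ).1

lemma isClosed_setOf_isLimitPlay (F : X → Set (X →₀ ℝ)) (μ : ProbabilityMeasure X) :
    IsClosed {ν | IsLimitPlay F μ ν} := by
  simp only [IsLimitPlay, ofPred_and, ofPred_forall]
  have hcoord : ∀ t, Continuous fun ν : ℕ → ProbabilityMeasure X => ν t := continuous_apply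
  exact (isClosed_closure.preimage (continuous_const.prodMk (hcoord 0))).inter <|
    isClosed_iInter fun t => isClosed_closure.preimage ((hcoord t).prodMk (hcoord (t + 1)))

end LimitPlays

section OneStep

variable {X : Type*} {F : X → Set (X →₀ ℝ)} {u v : X →₀ ℝ} {f : X → ℝ}

lemma exists_mem_Fhat_rExt_oneStep_le (hF : ∀ x, (F x).Nonempty) (hu : u ∈ Δf X) {ε : ℝ}
    (hε : 0 < ε) : ∃ v ∈ Fhat F u, rExt (oneStep F f) u - ε ≤ rExt f v := by
  have hgamble : ∀ x, ∃ v ∈ F x, oneStep F f x - ε < rExt f v := fun x => by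
    simpa using exists_lt_of_lt_csSup ((hF x).image (rExt f)) (sub_lt_self (oneStep F f x) hε)
  choose g hg hgε using hgamble
  refine ⟨_, linearCombination_mem_Fhat (fun x => subset_convexHull ℝ _ (hg x)) u, ?_⟩
  rw [rExt_linearCombination, ← rExt_sub_const hu]
  exact rExt_mono hu fun x => (hgε x).le

variable [MetricSpace X] [CompactSpace X]

lemma rExt_le_oneStep (hF : ∀ x, F x ⊆ Δf X) (hf : Continuous f) {x : X} (hv : v ∈ F x) :
    rExt f v ≤ oneStep F f x := by
  obtain ⟨C, hC⟩ := isCompact_univ.bddAbove_image hf.continuousOn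
  refine le_csSup ⟨C, forall_mem_image.2 fun w hw => ?_⟩ (mem_image_of_mem _ hv)
  exact rExt_mem_of_convex (convex_Iic C) (hF x hw) fun y => hC (mem_image_of_mem f trivial)

lemma IsNonexpansive.lipschitzWith_oneStep (hexp : IsNonexpansive F) (hF : IsGamblingHouse F)
    (hf : LipschitzWith 1 f) : LipschitzWith 1 (oneStep F f) := by
  refine lipschitzWith_one_iff_le_add.2 fun x y => csSup_le ((hF.nonempty x).image _) ?_
  refine forall_mem_image.2 fun u hu => ?_
  obtain ⟨v, hv, huv⟩ := hexp x y u hu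
  have hsub := rExt_sub_le_dKR (hF.subset_Δf x hu) (hF.subset_Δf y hv) hf
  linarith [rExt_le_oneStep hF.subset_Δf hf.continuous hv]

end OneStep

section Shadowing

variable {X : Type*} [MetricSpace X] [CompactSpace X] [MeasurableSpace X] [BorelSpace X]
  {F : X → Set (X →₀ ℝ)} {u v : X →₀ ℝ} {μ ν : ProbabilityMeasure X} {f : X → ℝ} {η η' : ℝ}

lemma IsNonexpansive.integral_le_integral_oneStep (hexp : IsNonexpansive F)
    (hF : IsGamblingHouse F) (hf : LipschitzWith 1 f) (h : (μ, ν) ∈ graphClosure F) :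
    ∫ x, f x ∂(ν : Measure X) ≤ ∫ x, oneStep F f x ∂(μ : Measure X) := by
  have hTf := (hexp.lipschitzWith_oneStep hF hf).continuous
  refine closure_minimal ?_ (isClosed_le ((continuous_integral hf.continuous).comp continuous_snd)
    ((continuous_integral hTf).comp continuous_fst)) h
  rintro ⟨_, _⟩ ⟨u, v, hu, hv, hμ, hν⟩
  obtain rfl : _ = finProba u hu := Subtype.ext hμ
  obtain rfl : _ = finProba v (Fhat_subset_Δf hF.subset_Δf hu hv) := Subtype.ext hν
  simpa only [mem_ofPred_eq, Function.comp_apply, integral_finProba hf.continuous,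
    integral_finProba hTf] using
    rExt_le_rExt_of_mem_Fhat (fun _ _ => rExt_le_oneStep hF.subset_Δf hf.continuous) hu hv

lemma IsNonexpansive.exists_mem_Fhat_isKRClose (hexp : IsNonexpansive F) (hF : IsGamblingHouse F)
    (h : (μ, ν) ∈ graphClosure F) (hu : u ∈ Δf X) (hμu : IsKRClose μ u η) (hη : η < η') :
    ∃ v ∈ Fhat F u, IsKRClose ν v η' := by
  refine exists_isKRClose_of_convex (η := (η + η') / 2) (convex_Fhat hu.1)
    (Fhat_subset_Δf hF.subset_Δf hu) (fun f hf => ?_) (by linarith)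
  obtain ⟨v, hv, hvf⟩ := exists_mem_Fhat_rExt_oneStep_le (f := f) hF.nonempty hu
    (show 0 < (η' - η) / 2 by linarith)
  refine ⟨v, hv, ?_⟩
  linarith [hexp.integral_le_integral_oneStep hF hf h, hμu _ (hexp.lipschitzWith_oneStep hF hf)]

-- The errors of the successive one-stage approximations are kept below `η'` by tracking an
-- increasing sequence of tolerances between `η` and `η'`.
lemma IsNonexpansive.exists_isPlayFrom_isKRClose (hexp : IsNonexpansive F)
    (hF : IsGamblingHouse F) {ν : ℕ → ProbabilityMeasure X} (hν : IsLimitPlay F μ ν)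
    (hu : u ∈ Δf X) (hμu : IsKRClose μ u η) (hη : η < η') :
    ∃ σ, IsPlayFrom F u σ ∧ ∀ t, IsKRClose (ν t) (σ t) η' := by
  obtain ⟨tol, htol, htolη, -⟩ := exists_seq_strictMono_tendsto' hη
  let State (t : ℕ) := {v : X →₀ ℝ // v ∈ Δf X ∧ IsKRClose (ν t) v (tol t)}
  have hnext : ∀ t (v : State t), ∃ v' : State (t + 1), v'.1 ∈ Fhat F v.1 := by
    rintro t ⟨v, hv, hνv⟩
    obtain ⟨v', hv', hνv'⟩ :=
      hexp.exists_mem_Fhat_isKRClose hF (hν.2 t) hv hνv (htol (Nat.lt_succ_self t))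
    exact ⟨⟨v', Fhat_subset_Δf hF.subset_Δf hv hv', hνv'⟩, hv'⟩
  obtain ⟨v₀, hv₀, hνv₀⟩ := hexp.exists_mem_Fhat_isKRClose hF hν.1 hu hμu (htolη 0).1
  choose next hnext using hnext
  let σ : ∀ t, State t := fun t => t.rec ⟨v₀, Fhat_subset_Δf hF.subset_Δf hu hv₀, hνv₀⟩ next
  exact ⟨fun t => (σ t).1, ⟨hv₀, fun t => hnext t (σ t)⟩, fun t f hf =>
    ((σ t).2.2 f hf).trans (by linarith [(htolη t).2])⟩

lemma exists_isKRClose (μ : ProbabilityMeasure X) (hη : 0 < η) : ∃ u ∈ Δf X, IsKRClose μ u η := by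
  refine exists_isKRClose_of_convex convex_Δf subset_rfl (fun f hf => ?_) hη
  obtain ⟨x, hx⟩ := exists_integral_le (integrable_of_continuous hf.continuous μ)
  exact ⟨single x 1, single_mem_Δf x, by rwa [rExt_single, add_zero]⟩

end Shadowing

/-- The `θ`-payoff of a sequence of elements of `Δ(X)`, as opposed to `Δ_f(X)`. -/
noncomputable def limitPayoff {X : Type*} [MeasurableSpace X] (r : X → ℝ) (θ : ℕ → ℝ)
    (ν : ℕ → ProbabilityMeasure X) : ℝ :=
  ∑' t, θ t * ∫ x, r x ∂(ν t : Measure X)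

section LimitPayoff

variable {X : Type*} [MeasurableSpace X] {F : X → Set (X →₀ ℝ)} {r : X → ℝ} {θ : ℕ → ℝ} {ε : ℝ}

lemma limitPayoff_const (r : X → ℝ) (hθ : IsEval θ) (μ : ProbabilityMeasure X) :
    limitPayoff r θ (fun _ => μ) = ∫ x, r x ∂(μ : Measure X) := by
  rw [limitPayoff, tsum_mul_right, hθ.2, one_mul]

variable [MetricSpace X] [CompactSpace X] [BorelSpace X]

lemma integral_mem_Icc (hr : Continuous r) (hr01 : ∀ x, r x ∈ Icc (0 : ℝ) 1)
    (μ : ProbabilityMeasure X) : ∫ x, r x ∂(μ : Measure X) ∈ Icc (0 : ℝ) 1 :=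
  (convex_Icc 0 1).integral_mem isClosed_Icc (Eventually.of_forall hr01)
    (integrable_of_continuous hr μ)

lemma limitPayoff_finProba (hr : Continuous r) (θ : ℕ → ℝ) {σ : ℕ → X →₀ ℝ}
    (hσ : ∀ t, σ t ∈ Δf X) : limitPayoff r θ (fun t => finProba (σ t) (hσ t)) = payoff r θ σ := by
  simp only [limitPayoff, payoff, integral_finProba hr]

lemma IsNonexpansive.exists_pos_forall_limitPayoff_le_payoff (hexp : IsNonexpansive F)
    (hF : IsGamblingHouse F) (hr : Continuous r) (hr01 : ∀ x, r x ∈ Icc (0 : ℝ) 1) (hε : 0 < ε) :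
    ∃ η > 0, ∀ (μ : ProbabilityMeasure X) (ν : ℕ → ProbabilityMeasure X), IsLimitPlay F μ ν →
      ∀ u ∈ Δf X, IsKRClose μ u η →
        ∃ σ, IsPlayFrom F u σ ∧ ∀ θ, IsEval θ → limitPayoff r θ ν ≤ payoff r θ σ + ε := by
  obtain ⟨η, hη, hrη⟩ := exists_pos_forall_isKRClose_integral_le hr hε
  refine ⟨η / 2, half_pos hη, fun μ ν hν u hu hμu => ?_⟩
  obtain ⟨σ, hσ, hνσ⟩ := hexp.exists_isPlayFrom_isKRClose hF hν hu hμu (half_lt_self hη)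
  have hσΔ := hσ.mem_Δf hF.subset_Δf hu
  exact ⟨σ, hσ, fun θ hθ => hθ.tsum_mul_le_add (fun t => integral_mem_Icc hr hr01 (ν t))
    (fun t => rExt_mem_of_convex (convex_Icc 0 1) (hσΔ t) hr01)
    fun t => hrη (ν t) (σ t) (hσΔ t) (hνσ t)⟩

lemma IsNonexpansive.exists_pos_forall_value_le_add (hexp : IsNonexpansive F)
    (hF : IsGamblingHouse F) (hr : Continuous r) (hr01 : ∀ x, r x ∈ Icc (0 : ℝ) 1) (hε : 0 < ε) :
    ∃ η > 0, ∀ θ, IsEval θ → ∀ x y, dist x y ≤ η → value F r θ x ≤ value F r θ y + ε := by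
  obtain ⟨η, hη, hplay⟩ := hexp.exists_pos_forall_limitPayoff_le_payoff hF hr hr01 hε
  refine ⟨η, hη, fun θ hθ x y hxy => value_le hF.nonempty fun σ hσ => ?_⟩
  obtain ⟨τ, hτ, hστ⟩ := hplay _ _ (hσ.isLimitPlay_finProba hF) (single y 1) (single_mem_Δf y)
    fun f hf => (isKRClose_diracProba_single x y f hf).trans (add_le_add_right hxy _)
  calc payoff r θ σ ≤ payoff r θ τ + ε := by
        simpa only [limitPayoff_finProba hr] using hστ θ hθ
    _ ≤ value F r θ y + ε :=
        add_le_add_left (payoff_le_value hF hr01 hθ ((isPlayFrom_single hF.nonempty).1 hτ)) ε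

lemma IsNonexpansive.uniformEquicontinuous_value (hexp : IsNonexpansive F)
    (hF : IsGamblingHouse F) (hr : Continuous r) (hr01 : ∀ x, r x ∈ Icc (0 : ℝ) 1) :
    UniformEquicontinuous fun θ : {θ // IsEval θ} => value F r θ.1 := by
  refine Metric.uniformEquicontinuous_iff.2 fun ε hε => ?_
  obtain ⟨η, hη, hle⟩ := hexp.exists_pos_forall_value_le_add hF hr hr01 (half_pos hε)
  refine ⟨η, hη, fun x y hxy θ => (abs_le.2 ⟨?_, ?_⟩).trans_lt (half_lt_self hε)⟩
  · linarith [hle θ.1 θ.2 y x (dist_comm x y ▸ hxy.le)]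
  · linarith [hle θ.1 θ.2 x y hxy.le]

lemma IsNonexpansive.continuous_value (hexp : IsNonexpansive F) (hF : IsGamblingHouse F)
    (hr : Continuous r) (hr01 : ∀ x, r x ∈ Icc (0 : ℝ) 1) (hθ : IsEval θ) :
    Continuous (value F r θ) :=
  (hexp.uniformEquicontinuous_value hF hr hr01).uniformContinuous ⟨θ, hθ⟩ |>.continuous

lemma IsNonexpansive.integral_le_integral_value (hexp : IsNonexpansive F)
    (hF : IsGamblingHouse F) (hr : Continuous r) (hr01 : ∀ x, r x ∈ Icc (0 : ℝ) 1)
    (hθ : IsEval θ) {μ : ProbabilityMeasure X} (hμ : μ ∈ invariantSet F) :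
    ∫ x, r x ∂(μ : Measure X) ≤ ∫ x, value F r θ x ∂(μ : Measure X) := by
  refine le_of_forall_pos_le_add fun ε hε => ?_
  obtain ⟨η, hη, hplay⟩ := hexp.exists_pos_forall_limitPayoff_le_payoff hF hr hr01 (half_pos hε)
  obtain ⟨η', hη', hvalue⟩ := exists_pos_forall_isKRClose_integral_le
    (hexp.continuous_value hF hr hr01 hθ).neg (half_pos hε)
  obtain ⟨u, hu, hμu⟩ := exists_isKRClose μ (lt_min hη hη')
  obtain ⟨σ, hσ, hσθ⟩ := hplay μ (fun _ => μ) ⟨hμ, fun _ => hμ⟩ u hu fun f hf =>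
    (hμu f hf).trans (add_le_add_right (min_le_left _ _) _)
  have hneg : rExt (-value F r θ) u = -rExt (value F r θ) u := by
    simp [rExt, Finsupp.sum]
  have hvalueu := hvalue μ u hu fun f hf => (hμu f hf).trans (add_le_add_right (min_le_right _ _) _)
  rw [integral_neg', hneg] at hvalueu
  have hσμ := hσθ θ hθ
  rw [limitPayoff_const r hθ] at hσμ
  linarith [payoff_le_rExt_value hF hr01 hθ hu hσ]

end LimitPayoff

section Occupation

variable {X : Type*} {F : X → Set (X →₀ ℝ)} {r f : X → ℝ} {θ : ℕ → ℝ} {σ : ℕ → X →₀ ℝ}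
  {u : X →₀ ℝ}

lemma rExt_centerMass {ι : Type*} (f : X → ℝ) (s : Finset ι) (c : ι → ℝ) (w : ι → X →₀ ℝ) :
    rExt f (s.centerMass c w) = (∑ i ∈ s, c i)⁻¹ * ∑ i ∈ s, c i * rExt f (w i) := by
  simp only [rExt_eq_linearCombination, Finset.centerMass, map_smul, map_sum, smul_eq_mul]

lemma IsEval.tendsto_rExt_centerMass (hθ : IsEval θ) (hr : ∀ x, r x ∈ Icc (0 : ℝ) 1)
    (hσ : ∀ t, σ t ∈ Δf X) :
    Tendsto (fun N => rExt r ((Finset.range N).centerMass θ σ)) atTop (𝓝 (payoff r θ σ)) := by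
  have hpayoff := hθ.summable_mul fun t => rExt_mem_of_convex (convex_Icc 0 1) (hσ t) hr
  simpa [rExt_centerMass, payoff] using
    (hθ.hasSum.tendsto_sum_nat.inv₀ one_ne_zero).mul hpayoff.hasSum.tendsto_sum_nat

lemma IsEval.abs_rExt_centerMass_sub_succ_le (hθ : IsEval θ) (hσ : ∀ t, σ t ∈ Δf X) {N : ℕ}
    (hN : 1 / 2 < ∑ t ∈ Finset.range N, θ t) {B : ℝ} (hf : ∀ x, |f x| ≤ B) :
    |rExt f ((Finset.range N).centerMass θ σ) -
      rExt f ((Finset.range N).centerMass θ fun t => σ (t + 1))| ≤ 6 * B * impatience θ := by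
  have hσf : ∀ t, |rExt f (σ t)| ≤ B := fun t =>
    abs_le.2 (rExt_mem_of_convex (convex_Icc _ _) (hσ t) fun x => abs_le.1 (hf x))
  have habel := hθ.abs_sum_range_mul_sub_succ_le hσf N
  have hinv : (∑ t ∈ Finset.range N, θ t)⁻¹ ≤ 2 := inv_le_of_inv_le₀ two_pos (by linarith)
  rw [rExt_centerMass, rExt_centerMass, ← mul_sub, ← Finset.sum_sub_distrib]
  simp only [← mul_sub]
  rw [abs_mul, abs_of_pos (inv_pos.2 (by linarith))]
  calc _ ≤ 2 * (3 * B * impatience θ) := mul_le_mul hinv habel (abs_nonneg _) two_pos.le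
    _ = 6 * B * impatience θ := by ring

-- The witnesses are the normalized occupation measures of a long initial segment of `σ` and of the
-- same segment of the play shifted by one stage.
lemma exists_almost_invariant_of_lt_payoff (hF : IsGamblingHouse F)
    (hr : ∀ x, r x ∈ Icc (0 : ℝ) 1) (hθ : IsEval θ) (hu : u ∈ Δf X) (hσ : IsPlayFrom F u σ)
    {c : ℝ} (hc : c < payoff r θ σ) :
    ∃ v ∈ Δf X, ∃ v' ∈ Fhat F v, c < rExt r v ∧ (∀ g, IsExcessive F g → rExt g v ≤ rExt g u) ∧
      ∀ (f : X → ℝ) (B : ℝ), (∀ x, |f x| ≤ B) → |rExt f v - rExt f v'| ≤ 6 * B * impatience θ := by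
  have hσΔ := hσ.mem_Δf hF.subset_Δf hu
  obtain ⟨N, hcN, hN⟩ := ((hθ.tendsto_rExt_centerMass hr hσΔ).eventually_const_lt hc).and
    (hθ.hasSum.tendsto_sum_nat.eventually_const_lt one_half_lt_one) |>.exists
  have hθ0 : ∀ t ∈ Finset.range N, 0 ≤ θ t := fun t _ => hθ.1 t
  have hpos : 0 < ∑ t ∈ Finset.range N, θ t := one_half_pos.trans hN
  refine ⟨_, convex_Δf.centerMass_mem hθ0 hpos fun t _ => hσΔ t,
    (Finset.range N).centerMass θ fun t => σ (t + 1), ?_, hcN, fun g hg => ?_, fun f B hf =>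
    hθ.abs_rExt_centerMass_sub_succ_le hσΔ hN hf⟩
  · exact smul_mem_Fhat
      (sum_smul_mem_Fhat hF.nonempty hθ0 (fun t _ => (hσΔ t).1) fun t _ => hσ.2 t) _
  · exact (convex_halfSpace_le (linearCombination ℝ g).isLinear _).centerMass_mem hθ0 hpos
      fun t _ => hg.rExt_le_of_isPlayFrom hF.subset_Δf hσ hu t

end Occupation

/-- The class of functions over which the infimum characterizing the value is taken. -/
structure IsAdmissible {X : Type*} [MetricSpace X] [MeasurableSpace X] [BorelSpace X]
    (F : X → Set (X →₀ ℝ)) (r : X → ℝ) (w : ProbabilityMeasure X → ℝ) : Prop where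
  continuous : Continuous w
  mem_Icc : ∀ μ, w μ ∈ Icc (0 : ℝ) 1
  isAffine : IsAffine w
  apply_le : ∀ y, ∀ u ∈ F y, ∀ μ : ProbabilityMeasure X, (μ : Measure X) = toMeas u →
    w μ ≤ w (diracProba y)
  integral_le : ∀ μ ∈ invariantSet F, ∫ y, r y ∂(μ : Measure X) ≤ w μ

section Admissible

variable {X : Type*} [MetricSpace X] [MeasurableSpace X] [BorelSpace X]
  {F : X → Set (X →₀ ℝ)} {r g : X → ℝ} {w : ProbabilityMeasure X → ℝ}

lemma isAdmissible_iff : IsAdmissible F r w ↔ Continuous w ∧ (∀ μ, w μ ∈ Icc (0 : ℝ) 1) ∧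
    IsAffine w ∧ (∀ y, ∀ u ∈ F y, ∀ μ : ProbabilityMeasure X, (μ : Measure X) = toMeas u →
      w μ ≤ w (diracProba y)) ∧ ∀ μ ∈ invariantSet F, ∫ y, r y ∂(μ : Measure X) ≤ w μ :=
  ⟨fun ⟨h₁, h₂, h₃, h₄, h₅⟩ => ⟨h₁, h₂, h₃, h₄, h₅⟩,
    fun ⟨h₁, h₂, h₃, h₄, h₅⟩ => ⟨h₁, h₂, h₃, h₄, h₅⟩⟩

lemma IsAdmissible.isExcessive (hw : IsAdmissible F r w) (hF : ∀ x, F x ⊆ Δf X) :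
    IsExcessive F fun x => w (diracProba x) := fun x u hu => by
  rw [← hw.isAffine.apply_finProba (hF x hu)]
  exact hw.apply_le x u hu _ rfl

variable [CompactSpace X]

lemma isAdmissible_integral (hF : ∀ x, F x ⊆ Δf X) (hg : Continuous g)
    (hg01 : ∀ x, g x ∈ Icc (0 : ℝ) 1) (hexc : IsExcessive F g)
    (hinv : ∀ μ ∈ invariantSet F, ∫ x, r x ∂(μ : Measure X) ≤ ∫ x, g x ∂(μ : Measure X)) :
    IsAdmissible F r fun μ => ∫ x, g x ∂(μ : Measure X) where
  continuous := continuous_integral hg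
  mem_Icc := integral_mem_Icc hg hg01
  isAffine := isAffine_integral hg
  apply_le y u hu μ hμ := by
    obtain rfl : μ = finProba u (hF y hu) := Subtype.ext hμ
    rw [integral_finProba hg, integral_diracProba hg]
    exact hexc y u hu
  integral_le := hinv

lemma exists_mem_invariantSet_mapClusterPt {ι : Type*} {l : Filter ι} [l.NeBot]
    {p : ι → ProbabilityMeasure X × ProbabilityMeasure X} (hp : ∀ᶠ i in l, p i ∈ graphClosure F)
    (hsub : ∀ f : X → ℝ, Continuous f → Tendsto (fun i =>
      ∫ x, f x ∂((p i).1 : Measure X) - ∫ x, f x ∂((p i).2 : Measure X)) l (𝓝 0)) :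
    ∃ μ ∈ invariantSet F, MapClusterPt μ l fun i => (p i).1 := by
  obtain ⟨⟨μ, ν⟩, -, hμν⟩ :=
    isCompact_univ.exists_mapClusterPt (f := l) (u := p) (by rw [principal_univ]; exact le_top)
  have hint : ∀ f : X → ℝ, Continuous f →
      ∫ x, f x ∂(μ : Measure X) = ∫ x, f x ∂(ν : Measure X) := fun f hf => by
    have hcont := ((continuous_integral hf).comp continuous_fst).sub
      ((continuous_integral hf).comp continuous_snd)
    have hcluster := hμν.continuousAt_comp hcont.continuousAt
    exact sub_eq_zero.1 (eq_of_nhds_neBot (hcluster.clusterPt.mono (hsub f hf)))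
  obtain rfl : μ = ν := Subtype.ext <|
    ext_of_forall_integral_eq_of_IsFiniteMeasure (μ := (μ : Measure X)) (ν := (ν : Measure X))
      fun f => hint f f.continuous
  exact ⟨μ, isClosed_closure.mem_of_mapClusterPt hμν hp,
    hμν.continuousAt_comp continuousAt_fst⟩

lemma IsAdmissible.exists_mem_graphClosure_of_lt_value (hw : IsAdmissible F r w)
    (hF : IsGamblingHouse F) (hr : Continuous r) (hr01 : ∀ x, r x ∈ Icc (0 : ℝ) 1) {θ : ℕ → ℝ}
    (hθ : IsEval θ) {x : X} {ε : ℝ} (hx : w (diracProba x) + ε < value F r θ x) :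
    ∃ p ∈ graphClosure F, w p.1 + ε ≤ ∫ y, r y ∂(p.1 : Measure X) ∧
      ∀ (f : X → ℝ) (B : ℝ), Continuous f → (∀ y, |f y| ≤ B) →
        |∫ y, f y ∂(p.1 : Measure X) - ∫ y, f y ∂(p.2 : Measure X)| ≤ 6 * B * impatience θ := by
  obtain ⟨σ, hσ, hσx⟩ := exists_isPlay_lt_payoff hF.nonempty hx
  obtain ⟨u, hu, v, hv, hur, huw, huv⟩ := exists_almost_invariant_of_lt_payoff hF hr01 hθ
    (single_mem_Δf x) ((isPlayFrom_single hF.nonempty).2 hσ) hσx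
  have hvΔ := Fhat_subset_Δf hF.subset_Δf hu hv
  have hwu : w (finProba u hu) ≤ w (diracProba x) := by
    simpa only [hw.isAffine.apply_finProba, rExt_single] using huw _ (hw.isExcessive hF.subset_Δf)
  refine ⟨(finProba u hu, finProba v hvΔ), mem_graphClosure_finProba hu hvΔ hv, ?_, ?_⟩
  · rw [integral_finProba hr]
    linarith
  · intro f B hf hB
    simpa only [integral_finProba hf] using huv f B hB

lemma IsAdmissible.eventually_value_le_add (hw : IsAdmissible F r w) (hF : IsGamblingHouse F)
    (hr : Continuous r) (hr01 : ∀ x, r x ∈ Icc (0 : ℝ) 1) {ε : ℝ} (hε : 0 < ε) :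
    ∀ᶠ θ in patient, ∀ x, value F r θ.1 x ≤ w (diracProba x) + ε := by
  let S : Set {θ // IsEval θ} := {θ | ∃ x, w (diracProba x) + ε < value F r θ.1 x}
  by_contra hS
  have : (comap ((↑) : S → {θ // IsEval θ}) patient).NeBot :=
    comap_neBot_iff_frequently.2 <| (not_eventually.1 hS).mono fun θ hθ => by
      push Not at hθ
      exact ⟨⟨θ, hθ⟩, rfl⟩
  choose p hpF hpr hpf using fun θ : S =>
    hw.exists_mem_graphClosure_of_lt_value hF hr hr01 θ.1.2 θ.2.choose_spec
  have hsub : ∀ f : X → ℝ, Continuous f → Tendsto (fun θ =>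
      ∫ x, f x ∂((p θ).1 : Measure X) - ∫ x, f x ∂((p θ).2 : Measure X))
        (comap (↑) patient) (𝓝 0) := fun f hf => by
    obtain ⟨B, hB⟩ := isCompact_univ.exists_bound_of_continuousOn hf.continuousOn
    refine squeeze_zero_norm (fun θ => hpf θ f B hf fun x => hB x trivial) ?_
    simpa using (tendsto_impatience_patient.comp tendsto_comap).const_mul (6 * B)
  obtain ⟨μ, hμR, hμ⟩ :=
    exists_mem_invariantSet_mapClusterPt (Eventually.of_forall hpF) hsub
  have hμw : w μ + ε ≤ ∫ x, r x ∂(μ : Measure X) :=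
    (isClosed_le (hw.continuous.add continuous_const) (continuous_integral hr)).mem_of_mapClusterPt
      hμ (Eventually.of_forall hpr)
  linarith [hw.integral_le μ hμR]

end Admissible

/-- The candidate for the general uniform value `v*`. -/
noncomputable def limitValue {X : Type*} [MetricSpace X] [MeasurableSpace X] [BorelSpace X]
    (F : X → Set (X →₀ ℝ)) (r : X → ℝ) (x : X) : ℝ :=
  sInf {c | ∃ w, IsAdmissible F r w ∧ c = w (diracProba x)}

section LimitValue

variable {X : Type*} {F : X → Set (X →₀ ℝ)} {r g : X → ℝ} {l : Filter {θ // IsEval θ}}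

lemma isExcessive_of_tendsto_value (hF : IsGamblingHouse F) (hr01 : ∀ x, r x ∈ Icc (0 : ℝ) 1)
    [l.NeBot] (hl : l ≤ patient) (hg : Tendsto (fun θ => value F r θ.1) l (𝓝 g)) :
    IsExcessive F g := fun x u hu => by
  have hgx := tendsto_pi_nhds.1 hg
  have hleft : Tendsto (fun θ => rExt (value F r θ.1) u) l (𝓝 (rExt g u)) :=
    tendsto_finsetSum _ fun y _ => (hgx y).const_mul (u y)
  have hright := (hgx x).add (tendsto_impatience_patient.mono_left hl)
  rw [add_zero] at hright
  exact le_of_tendsto_of_tendsto' hleft hright fun θ =>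
    rExt_value_le_value_add_impatience hF hr01 θ.2 hu

variable [MetricSpace X] [CompactSpace X] [MeasurableSpace X] [BorelSpace X]

lemma IsNonexpansive.tendstoUniformly_value (hexp : IsNonexpansive F) (hF : IsGamblingHouse F)
    (hr : Continuous r) (hr01 : ∀ x, r x ∈ Icc (0 : ℝ) 1)
    (hg : Tendsto (fun θ => value F r θ.1) l (𝓝 g)) :
    TendstoUniformly (fun θ => value F r θ.1) g l := by
  have hequi := (hexp.uniformEquicontinuous_value hF hr hr01).equicontinuous
  exact UniformFun.tendsto_iff_tendstoUniformly.1 ((hequi.tendsto_uniformFun_iff_pi l g).2 hg)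

lemma IsNonexpansive.isAdmissible_of_tendsto_value (hexp : IsNonexpansive F)
    (hF : IsGamblingHouse F) (hr : Continuous r) (hr01 : ∀ x, r x ∈ Icc (0 : ℝ) 1) [l.NeBot]
    (hl : l ≤ patient) (hg : Tendsto (fun θ => value F r θ.1) l (𝓝 g)) :
    IsAdmissible F r fun μ => ∫ x, g x ∂(μ : Measure X) := by
  have hgcont : Continuous g := hg.continuous_of_equicontinuous
    (hexp.uniformEquicontinuous_value hF hr hr01).equicontinuous
  refine isAdmissible_integral hF.subset_Δf hgcont (fun x => ?_)
    (isExcessive_of_tendsto_value hF hr01 hl hg) fun μ hμ => ?_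
  · exact isClosed_Icc.mem_of_tendsto (tendsto_pi_nhds.1 hg x)
      (Eventually.of_forall fun θ => value_mem_Icc hF hr01 θ.2 x)
  · have hunif := hexp.tendstoUniformly_value hF hr hr01 hg
    refine le_of_forall_pos_le_add fun ε hε => ?_
    obtain ⟨θ, hθ⟩ := (Metric.tendstoUniformly_iff.1 hunif ε hε).exists
    have hvalue : ∀ x, value F r θ.1 x - ε ≤ g x := fun x => by
      linarith [(abs_lt.1 (hθ x)).1]
    have hv := hexp.continuous_value hF hr hr01 θ.2
    calc ∫ x, r x ∂(μ : Measure X) ≤ ∫ x, value F r θ.1 x ∂(μ : Measure X) :=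
          hexp.integral_le_integral_value hF hr hr01 θ.2 hμ
      _ ≤ ∫ x, g x ∂(μ : Measure X) + ε := by
          rw [← sub_le_iff_le_add, ← integral_sub_const hv]
          exact integral_mono (integrable_of_continuous (hv.sub continuous_const) μ)
            (integrable_of_continuous hgcont μ) hvalue

lemma IsNonexpansive.eq_limitValue_of_tendsto_value (hexp : IsNonexpansive F)
    (hF : IsGamblingHouse F) (hr : Continuous r) (hr01 : ∀ x, r x ∈ Icc (0 : ℝ) 1) [l.NeBot]
    (hl : l ≤ patient) (hg : Tendsto (fun θ => value F r θ.1) l (𝓝 g)) : g = limitValue F r := by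
  have hadm := hexp.isAdmissible_of_tendsto_value hF hr hr01 hl hg
  have hgcont : Continuous g := hg.continuous_of_equicontinuous
    (hexp.uniformEquicontinuous_value hF hr hr01).equicontinuous
  refine funext fun x => ?_
  have hmem : g x ∈ {c | ∃ w, IsAdmissible F r w ∧ c = w (diracProba x)} :=
    ⟨_, hadm, (integral_diracProba hgcont x).symm⟩
  refine (IsLeast.csInf_eq ⟨hmem, ?_⟩).symm
  rintro _ ⟨w, hw, rfl⟩
  exact le_of_forall_pos_le_add fun ε hε => le_of_tendsto (tendsto_pi_nhds.1 hg x)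
    (((hw.eventually_value_le_add hF hr hr01 hε).filter_mono hl).mono fun θ hθ => hθ x)

lemma IsNonexpansive.tendsto_value_limitValue (hexp : IsNonexpansive F) (hF : IsGamblingHouse F)
    (hr : Continuous r) (hr01 : ∀ x, r x ∈ Icc (0 : ℝ) 1) :
    Tendsto (fun θ => value F r θ.1) patient (𝓝 (limitValue F r)) := by
  refine (tendsto_iff_ultrafilter _ _ _).2 fun l hl => ?_
  have hcompact : IsCompact (univ.pi fun _ : X => Icc (0 : ℝ) 1) :=
    isCompact_univ_pi fun _ => isCompact_Icc
  obtain ⟨g, -, hg⟩ := hcompact.ultrafilter_le_nhds (l.map fun θ => value F r θ.1) <|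
    tendsto_principal.2 <| Eventually.of_forall fun θ x _ => value_mem_Icc hF hr01 θ.2 x
  rwa [← hexp.eq_limitValue_of_tendsto_value hF hr hr01 hl hg]

lemma IsNonexpansive.eventually_abs_value_sub_limitValue_le (hexp : IsNonexpansive F)
    (hF : IsGamblingHouse F) (hr : Continuous r) (hr01 : ∀ x, r x ∈ Icc (0 : ℝ) 1) {ε : ℝ}
    (hε : 0 < ε) : ∀ᶠ θ in patient, ∀ x, |value F r θ.1 x - limitValue F r x| ≤ ε := by
  have hunif := hexp.tendstoUniformly_value hF hr hr01
    (hexp.tendsto_value_limitValue hF hr hr01)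
  filter_upwards [Metric.tendstoUniformly_iff.1 hunif ε hε] with θ hθ x
  rw [abs_sub_comm]
  exact (hθ x).le

end LimitValue

section Minmax

variable {X : Type*} {F : X → Set (X →₀ ℝ)} {r : X → ℝ} {θ : ℕ → ℝ} {u : X →₀ ℝ} {x : X} {c : ℝ}
  {E : Set (ℕ → ℝ)}

lemma concaveOn_payoff (hF : ∀ x, F x ⊆ Δf X) (hr : ∀ x, r x ∈ Icc (0 : ℝ) 1) (hθ : IsEval θ)
    (hu : u ∈ Δf X) : ConcaveOn ℝ {σ | IsPlayFrom F u σ} (payoff r θ) := by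
  have hsum : ∀ σ, IsPlayFrom F u σ → HasSum (fun t => θ t * rExt r (σ t)) (payoff r θ σ) :=
    fun σ hσ => (hθ.summable_mul fun t =>
      rExt_mem_of_convex (convex_Icc 0 1) (hσ.mem_Δf hF hu t) hr).hasSum
  refine ⟨convex_setOf_isPlayFrom hF hu, fun σ hσ τ hτ a b _ _ _ => ?_⟩
  have hmix := (((hsum σ hσ).mul_left a).add ((hsum τ hτ).mul_left b)).tsum_eq
  refine hmix.symm.trans (tsum_congr fun t => ?_) |>.le
  simp only [rExt_eq_linearCombination, Pi.add_apply, Pi.smul_apply, map_add, map_smul, smul_eq_mul]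
  ring

lemma sum_mul_payoff {ι : Type*} [Fintype ι] (hr : ∀ x, r x ∈ Icc (0 : ℝ) 1) (l : ι → ℝ)
    {θ : ι → ℕ → ℝ} (hθ : ∀ i, IsEval (θ i)) {σ : ℕ → X →₀ ℝ} (hσ : ∀ t, σ t ∈ Δf X) :
    ∑ i, l i * payoff r (θ i) σ = payoff r (∑ i, l i • θ i) σ := by
  have hsum : ∀ i, HasSum (fun t => θ i t * rExt r (σ t)) (payoff r (θ i) σ) := fun i =>
    ((hθ i).summable_mul fun t => rExt_mem_of_convex (convex_Icc 0 1) (hσ t) hr).hasSum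
  refine ((hasSum_sum fun i _ => (hsum i).mul_left (l i)).tsum_eq.symm).trans
    (tsum_congr fun t => ?_)
  simp only [Finset.sum_apply, Pi.smul_apply, smul_eq_mul, Finset.sum_mul, mul_assoc]

lemma exists_isPlay_forall_lt_payoff {ι : Type*} [Finite ι] (hF : IsGamblingHouse F)
    (hr : ∀ x, r x ∈ Icc (0 : ℝ) 1) (hE : Convex ℝ E) (hEval : ∀ θ ∈ E, IsEval θ)
    (hc : ∀ θ ∈ E, c < value F r θ x) {θ : ι → ℕ → ℝ} (hθ : ∀ i, θ i ∈ E) :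
    ∃ σ, IsPlay F x σ ∧ ∀ i, c < payoff r (θ i) σ := by
  cases nonempty_fintype ι
  have hplay := fun σ => isPlayFrom_single (x := x) (σ := σ) hF.nonempty
  have hmix : ∀ l ∈ stdSimplex ℝ ι, ∃ σ ∈ {σ | IsPlayFrom F (single x 1) σ},
      c < ∑ i, l i * payoff r (θ i) σ := fun l hl => by
    have hlE := hE.sum_mem (fun i _ => hl.1 i) hl.2 fun i _ => hθ i
    obtain ⟨σ, hσ, hσc⟩ := exists_isPlay_lt_payoff hF.nonempty (hc _ hlE)
    refine ⟨σ, (hplay σ).2 hσ, ?_⟩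
    rwa [sum_mul_payoff hr l (fun i => hEval _ (hθ i)) (hσ.mem_Δf hF)]
  have hconcave : ∀ i, ConcaveOn ℝ {σ | IsPlayFrom F (single x 1) σ} (payoff r (θ i)) := fun i =>
    concaveOn_payoff hF.subset_Δf hr (hEval _ (hθ i)) (single_mem_Δf x)
  obtain ⟨σ, hσ, hσc⟩ := exists_forall_lt_of_concaveOn
    (exists_isPlayFrom hF.nonempty (single x 1)) hconcave hmix
  exact ⟨σ, (hplay σ).1 hσ, hσc⟩

variable [MetricSpace X] [CompactSpace X] [MeasurableSpace X] [BorelSpace X]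

lemma continuous_limitPayoff (hr : Continuous r) (hr01 : ∀ x, r x ∈ Icc (0 : ℝ) 1)
    (hθ : IsEval θ) : Continuous (limitPayoff r θ) := by
  refine continuous_tsum (fun t => ((continuous_integral hr).comp (continuous_apply t)).const_mul _)
    hθ.summable fun t ν => ?_
  obtain ⟨h0, h1⟩ := integral_mem_Icc hr hr01 (ν t)
  rw [Real.norm_of_nonneg (mul_nonneg (hθ.1 t) h0)]
  exact mul_le_of_le_one_right (hθ.1 t) h1

lemma exists_isLimitPlay_forall_le_limitPayoff (hF : IsGamblingHouse F) (hr : Continuous r)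
    (hr01 : ∀ x, r x ∈ Icc (0 : ℝ) 1) (hE : Convex ℝ E) (hEval : ∀ θ ∈ E, IsEval θ)
    (hc : ∀ θ ∈ E, c < value F r θ x) :
    ∃ ν, IsLimitPlay F (diracProba x) ν ∧ ∀ θ ∈ E, c ≤ limitPayoff r θ ν := by
  have hcompact := (isClosed_setOf_isLimitPlay F (diracProba x)).isCompact
  obtain ⟨ν, hν, hνE⟩ := hcompact.inter_iInter_nonempty
    (fun θ : E => {ν | c ≤ limitPayoff r θ ν})
    (fun θ => isClosed_le continuous_const (continuous_limitPayoff hr hr01 (hEval θ θ.2)))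
    fun T => by
      obtain ⟨σ, hσ, hσT⟩ := exists_isPlay_forall_lt_payoff hF hr01 hE hEval hc
        (θ := fun θ : T => θ.1.1) fun θ => θ.1.2
      refine ⟨fun t => finProba (σ t) (hσ.mem_Δf hF t), hσ.isLimitPlay_finProba hF,
        mem_iInter₂.2 fun θ hθ => ?_⟩
      rw [mem_ofPred_eq, limitPayoff_finProba hr]
      exact (hσT ⟨θ, hθ⟩).le
  exact ⟨ν, hν, fun θ hθ => mem_iInter.1 hνE ⟨θ, hθ⟩⟩

lemma IsNonexpansive.exists_isPlay_forall_le_payoff_add (hexp : IsNonexpansive F)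
    (hF : IsGamblingHouse F) (hr : Continuous r) (hr01 : ∀ x, r x ∈ Icc (0 : ℝ) 1)
    (hE : Convex ℝ E) (hEval : ∀ θ ∈ E, IsEval θ) (hc : ∀ θ ∈ E, c < value F r θ x) {ε : ℝ}
    (hε : 0 < ε) : ∃ σ, IsPlay F x σ ∧ ∀ θ ∈ E, c ≤ payoff r θ σ + ε := by
  obtain ⟨ν, hν, hνE⟩ := exists_isLimitPlay_forall_le_limitPayoff hF hr hr01 hE hEval hc
  obtain ⟨η, hη, hplay⟩ := hexp.exists_pos_forall_limitPayoff_le_payoff hF hr hr01 hε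
  obtain ⟨σ, hσ, hνσ⟩ := hplay _ ν hν (single x 1) (single_mem_Δf x) fun f hf =>
    (isKRClose_diracProba_single x x f hf).trans (by rw [dist_self]; gcongr)
  exact ⟨σ, (isPlayFrom_single hF.nonempty).1 hσ, fun θ hθ =>
    (hνE θ hθ).trans (hνσ θ (hEval θ hθ))⟩

lemma IsNonexpansive.exists_pos_forall_exists_isPlay_limitValue_sub_le (hexp : IsNonexpansive F)
    (hF : IsGamblingHouse F) (hr : Continuous r) (hr01 : ∀ x, r x ∈ Icc (0 : ℝ) 1) {ε : ℝ}
    (hε : 0 < ε) : ∃ α > 0, ∀ x, ∃ σ, IsPlay F x σ ∧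
      ∀ θ, IsEval θ → impatience θ ≤ α → limitValue F r x - ε ≤ payoff r θ σ := by
  obtain ⟨α, hα, hvalue⟩ := eventually_patient_iff.1
    (hexp.eventually_abs_value_sub_limitValue_le hF hr hr01 (show 0 < ε / 3 by positivity))
  refine ⟨α, hα, fun x => ?_⟩
  obtain ⟨σ, hσ, hσE⟩ := hexp.exists_isPlay_forall_le_payoff_add hF hr hr01
    (convex_setOf_isEval_impatience_le α) (fun θ hθ => hθ.1)
    (c := limitValue F r x - 2 * (ε / 3)) (x := x)
    (fun θ hθ => by linarith [(abs_le.1 (hvalue ⟨θ, hθ.1⟩ hθ.2 x)).1])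
    (show 0 < ε / 3 by positivity)
  exact ⟨σ, hσ, fun θ hθ hθα => by linarith [hσE θ ⟨hθ, hθα⟩]⟩

end Minmax

end Stmt15

/-- **Theorem 3 (Renault–Venel).** A Gambling House `Γ = (X,F,r)` with `X` compact
metric, `r` continuous and `F` non-expansive for `d_KR` has a general uniform value
`v*`, which is characterized as the infimum, over all continuous affine
`w : Δ(X) → [0,1]` that are (1) excessive and (2) above the payoff on invariant
measures, of `w(δ_x)`. -/
theorem stmt15 (X : Type*) [MetricSpace X] [CompactSpace X]
    [MeasurableSpace X] [BorelSpace X]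
    (F : X → Set (X →₀ ℝ)) (hFne : ∀ x, (F x).Nonempty)
    (hFΔ : ∀ x, F x ⊆ Stmt15.Δf X)
    (r : X → ℝ) (hr : Continuous r) (hr01 : ∀ x, r x ∈ Icc (0:ℝ) 1)
    (hexp : ∀ x x' : X, ∀ u ∈ F x, ∃ u' ∈ F x', Stmt15.dKR u u' ≤ dist x x') :
    ∃ vstar : X → ℝ,
      -- general limit value: uniform convergence of `v_θ` to `v*` as `I(θ) → 0`
      (∀ ε > (0:ℝ), ∃ α > (0:ℝ), ∀ θ : ℕ → ℝ, Stmt15.IsEval θ →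
        Stmt15.impatience θ ≤ α →
        ∀ x : X, |Stmt15.value F r θ x - vstar x| ≤ ε) ∧
      -- general uniform value: plays that are simultaneously almost optimal for all
      -- sufficiently patient evaluations
      (∀ ε > (0:ℝ), ∃ α > (0:ℝ), ∀ x : X, ∃ σ : ℕ → (X →₀ ℝ), Stmt15.IsPlay F x σ ∧
        ∀ θ : ℕ → ℝ, Stmt15.IsEval θ → Stmt15.impatience θ ≤ α →
          Stmt15.payoff r θ σ ≥ vstar x - ε) ∧
      -- characterization of `v*`
      (∀ x : X, vstar x =
        sInf {c : ℝ | ∃ w : ProbabilityMeasure X → ℝ, Continuous w ∧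
          (∀ μ, w μ ∈ Icc (0:ℝ) 1) ∧ Stmt15.IsAffine w ∧
          (∀ y : X, ∀ u ∈ F y, ∀ μ : ProbabilityMeasure X,
            (μ : Measure X) = Stmt15.toMeas u →
            w ⟨Measure.dirac y, inferInstance⟩ ≥ w μ) ∧
          (∀ μ ∈ Stmt15.invariantSet F, w μ ≥ ∫ y, r y ∂(μ : Measure X)) ∧
          c = w ⟨Measure.dirac x, inferInstance⟩}) := by
  have hF : Stmt15.IsGamblingHouse F := ⟨hFne, hFΔ⟩
  have hexpF : Stmt15.IsNonexpansive F := hexp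
  refine ⟨Stmt15.limitValue F r, fun ε hε => ?_, fun ε hε => ?_, fun x => ?_⟩
  · obtain ⟨α, hα, hvalue⟩ := Stmt15.eventually_patient_iff.1
      (hexpF.eventually_abs_value_sub_limitValue_le hF hr hr01 hε)
    exact ⟨α, hα, fun θ hθ => hvalue ⟨θ, hθ⟩⟩
  · exact hexpF.exists_pos_forall_exists_isPlay_limitValue_sub_le hF hr hr01 hε
  · simp only [Stmt15.limitValue, Stmt15.isAdmissible_iff, and_assoc]
    rfl
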